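/- Let μ > 0 and let γ₂ be a closed regular curve in S² with unit normal n₂ and geodesic curvature κ₂ satisfying max κ₂ < μ, whose restriction to [a₂,b₂] is a positive shell with image Σ₂ and interior domain Δ. For t ∈ [a₂,b₂] let C_t denote the tangent μ-circle to γ₂ at γ₂(t) on the normal side, with center o_t = (μγ₂(t)+n₂(t))/√(1+μ²). Suppose t₁ ∈ (a₂,b₂) satisfies: C_{t₁} is contained in the closure of Δ, and for every t ∈ (a₂,t₁) the circle C_t is not contained in the closure of Δ. Set t₂ := sup{t ∈ [a₂,b₂] : γ₂(t) ∈ C_{t₁}}, P := γ₂(t₁) and Q := γ₂(t₂). Then the unique θ ∈ [0,2π) such that Q is the image of P under the rotation of ℝ³ through angle θ about the oriented axis o_{t₁} satisfies θ ≥ π. -/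

import Mathlib

noncomputable section

open Matrix

/-- Euclidean 3-space (as triples of reals). -/
abbrev R3 : Type := Fin 3 → ℝ

/-- The Euclidean inner product on ℝ³. -/
def dot3 (a b : R3) : ℝ := a 0 * b 0 + a 1 * b 1 + a 2 * b 2

/-- The Euclidean norm on ℝ³. -/
def norm3 (a : R3) : ℝ := Real.sqrt (dot3 a a)

/-- The cross product on ℝ³. -/
def cross3 (a b : R3) : R3 :=
  ![a 1 * b 2 - a 2 * b 1, a 2 * b 0 - a 0 * b 2, a 0 * b 1 - a 1 * b 0]

/-- The determinant of three vectors in ℝ³. -/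
def det3 (a b c : R3) : ℝ := dot3 a (cross3 b c)

/-- `γ : ℝ → ℝ³` is a regular curve in the unit sphere S²:
it is smooth, takes values in S², and has nowhere-vanishing derivative. -/
structure IsRegularCurve (γ : ℝ → R3) : Prop where
  smooth : ContDiff ℝ (⊤ : ℕ∞) γ
  sphere : ∀ s, dot3 (γ s) (γ s) = 1
  reg : ∀ s, deriv γ s ≠ 0

/-- The geodesic curvature `κ(s) = det(γ, γ', γ'')/|γ'|³` of a curve in S². -/
def kappa (γ : ℝ → R3) (s : ℝ) : ℝ :=
  det3 (γ s) (deriv γ s) (deriv (deriv γ) s) / norm3 (deriv γ s) ^ 3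

/-- The unit normal `n(s) = (γ × γ')/|γ'|` of a curve in S². -/
def unitNormal (γ : ℝ → R3) (s : ℝ) : R3 :=
  (norm3 (deriv γ s))⁻¹ • cross3 (γ s) (deriv γ s)

/-- `γ` is closed of period `l > 0`. -/
def HasPeriod (γ : ℝ → R3) (l : ℝ) : Prop := 0 < l ∧ ∀ s, γ (s + l) = γ s

/-- 2×2 complex matrices. -/
abbrev Mat2 := Matrix (Fin 2) (Fin 2) ℂ

def E1 : Mat2 := !![0, Complex.I; Complex.I, 0]
def E2 : Mat2 := !![0, -1; 1, 0]
def E3 : Mat2 := !![Complex.I, 0; 0, -Complex.I]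

/-- The identification of ℝ³ with su(2) via the orthonormal basis e₁, e₂, e₃. -/
def toSu2 (v : R3) : Mat2 := (v 0 : ℂ) • E1 + (v 1 : ℂ) • E2 + (v 2 : ℂ) • E3

/-- The adjoint action `Ad(a)x = a x a⁻¹`. -/
def AdM (a x : Mat2) : Mat2 := a * x * a⁻¹

/-- `c : ℝ → SU(2)` is a lift of the regular curve `γ` in S²:
it is smooth (entrywise), takes values in SU(2), and satisfies
`Ad(c(s))e₃ = γ(s)` and `Ad(c(s))e₁ = γ'(s)/|γ'(s)|` under `toSu2`. -/
structure IsLift (γ : ℝ → R3) (c : ℝ → Mat2) : Prop where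
  mem : ∀ s, c s ∈ Matrix.specialUnitaryGroup (Fin 2) ℂ
  smooth : ∀ i j, ContDiff ℝ (⊤ : ℕ∞) fun s => c s i j
  ad3 : ∀ s, AdM (c s) E3 = toSu2 (γ s)
  ad1 : ∀ s, AdM (c s) E1 = toSu2 ((norm3 (deriv γ s))⁻¹ • deriv γ s)

/-- The entrywise derivative of a matrix-valued curve. -/
def matDeriv (c : ℝ → Mat2) (s : ℝ) : Mat2 :=
  Matrix.of fun i j => deriv (fun t => c t i j) s

/-- The map `f_{γ₁,γ₂}(s₁,s₂) = c₁(0)⁻¹ c₁(s₁) c₂(s₂)⁻¹ c₂(0)` associated to lifts `c₁, c₂`. -/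
def fmap (c1 c2 : ℝ → Mat2) (s1 s2 : ℝ) : Mat2 :=
  (c1 0)⁻¹ * c1 s1 * (c2 s2)⁻¹ * c2 0

/-- `(γ₁, γ₂)` is an admissible pair. -/
structure IsAdmissiblePair (γ1 γ2 : ℝ → R3) : Prop where
  reg1 : IsRegularCurve γ1
  reg2 : IsRegularCurve γ2
  param1 : ∀ s, norm3 (deriv γ1 s) ^ 2 * (1 + kappa γ1 s ^ 2) = 4
  param2 : ∀ s, norm3 (deriv γ2 s) ^ 2 * (1 + kappa γ2 s ^ 2) = 4
  curv : ∀ s1 s2, kappa γ2 s2 < kappa γ1 s1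

/-- The restriction of `γ` to `[a,b]` is a shell. -/
def IsShell (γ : ℝ → R3) (a b : ℝ) : Prop :=
  a < b ∧ Set.InjOn γ (Set.Ico a b) ∧ γ a = γ b ∧
    LinearIndependent ℝ ![deriv γ a, deriv γ b]

/-- A positive shell: `det(γ(a), γ'(a), γ'(b)) < 0`. -/
def IsPositiveShell (γ : ℝ → R3) (a b : ℝ) : Prop :=
  IsShell γ a b ∧ det3 (γ a) (deriv γ a) (deriv γ b) < 0

/-- A negative shell: `det(γ(a), γ'(a), γ'(b)) > 0`. -/
def IsNegativeShell (γ : ℝ → R3) (a b : ℝ) : Prop :=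
  IsShell γ a b ∧ 0 < det3 (γ a) (deriv γ a) (deriv γ b)

/-- The unit sphere S² in ℝ³. -/
def sphere2 : Set R3 := {x | dot3 x x = 1}

/-- The μ-circle with center `o ∈ S²`. -/
def muCircle (μ : ℝ) (o : R3) : Set R3 :=
  {x | dot3 x x = 1 ∧ dot3 x o = μ / Real.sqrt (1 + μ ^ 2)}

/-- The (open) interior domain of the μ-circle with center `o ∈ S²`. -/
def muDisk (μ : ℝ) (o : R3) : Set R3 :=
  {x | dot3 x x = 1 ∧ μ / Real.sqrt (1 + μ ^ 2) < dot3 x o}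

def normalize3 (v : R3) : R3 := (norm3 v)⁻¹ • v

/-- `Δ` is the interior domain of the shell `γ|_{[a,b]}`: it is a connected component of the
complement of the image of the shell in S², and for each `s ∈ (a,b)` the points obtained by
pushing `γ(s)` slightly in the direction `σ • n(s)` (σ = 1 for a positive shell, σ = -1 for a
negative shell) belong to `Δ`. -/
def IsInteriorDomain (γ : ℝ → R3) (a b σ : ℝ) (Δ : Set R3) : Prop :=
  (∃ p ∈ sphere2 \ γ '' Set.Icc a b,
      Δ = connectedComponentIn (sphere2 \ γ '' Set.Icc a b) p) ∧
    ∀ s ∈ Set.Ioo a b, ∃ ε > 0, ∀ δ ∈ Set.Ioo (0 : ℝ) ε,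
      normalize3 (γ s + (σ * δ) • unitNormal γ s) ∈ Δ

/-- The center `o_t = (μ γ(t) + n(t))/√(1+μ²)` of the tangent μ-circle to `γ` at `γ(t)`
on the normal side. -/
def tangentCenter (μ : ℝ) (γ : ℝ → R3) (t : ℝ) : R3 :=
  (Real.sqrt (1 + μ ^ 2))⁻¹ • (μ • γ t + unitNormal γ t)

/-- The rotation of ℝ³ through angle `θ` about the oriented (unit) axis `o`. -/
def rot3 (o : R3) (θ : ℝ) (x : R3) : R3 :=
  Real.cos θ • x + Real.sin θ • cross3 o x + ((1 - Real.cos θ) * dot3 o x) • o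

/-- A closed regular curve of period `l` is generic: every self-intersection is a
transversal double point. -/
def IsGeneric (γ : ℝ → R3) (l : ℝ) : Prop :=
  ∀ s t : ℝ, γ s = γ t → (¬∃ k : ℤ, s - t = k * l) →
    LinearIndependent ℝ ![deriv γ s, deriv γ t] ∧
      ∀ u : ℝ, γ u = γ s → (∃ k : ℤ, u - s = k * l) ∨ (∃ k : ℤ, u - t = k * l)

/-- The number of crossings (self-intersection points) of a closed curve of period `l`. -/
def crossings (γ : ℝ → R3) (l : ℝ) : ℕ :=
  Set.ncard {p : R3 | ∃ s t : ℝ, γ s = p ∧ γ t = p ∧ ¬∃ k : ℤ, s - t = k * l}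

/-- The spherical (geodesic) distance on S³, identified with SU(2):
`dist(A,B) = arccos(Re trace(A Bᴴ)/2)`, which corresponds to the round distance on the
unit sphere S³ ⊂ ℝ⁴. -/
def distS3 (A B : Mat2) : ℝ := Real.arccos ((Matrix.trace (A * Bᴴ)).re / 2)

/-- The extrinsic diameter of the image of the map `f` associated to the lifts `c₁, c₂`. -/
def extDiam (c1 c2 : ℝ → Mat2) : ℝ :=
  sSup {d : ℝ | ∃ s1 s2 u1 u2 : ℝ, d = distS3 (fmap c1 c2 s1 s2) (fmap c1 c2 u1 u2)}

/-- The parallel curve `γ^θ = (cos θ) γ + (sin θ) n`. -/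
def parallelCurve (γ : ℝ → R3) (θ : ℝ) (s : ℝ) : R3 :=
  Real.cos θ • γ s + Real.sin θ • unitNormal γ s

/-- The arclength-type parameter `s(t) = (1/2)∫₀ᵗ |γ'(u)|√(1+κ(u)²) du`. -/
def arcParam (γ : ℝ → R3) (t : ℝ) : ℝ :=
  (1 / 2) * ∫ u in (0 : ℝ)..t, norm3 (deriv γ u) * Real.sqrt (1 + kappa γ u ^ 2)

section Topology

open Complex Topology

/-- A continuous nowhere vanishing function on the plane has a continuous logarithm. -/
theorem exists_continuous_log (f : ℝ × ℝ → ℂ) (hf : Continuous f) (h0 : ∀ x, f x ≠ 0) :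
    ∃ L : ℝ × ℝ → ℂ, Continuous L ∧ ∀ x, exp (L x) = f x := by
  obtain ⟨F, ⟨-, hF⟩, -⟩ := isCoveringMapOn_exp.existsUnique_continuousMap_lifts
    ⟨f, hf⟩ (a₀ := (0, 0)) (exp_log (h0 (0, 0))) (fun x => h0 x)
  exact ⟨F, F.continuous, fun x => congrFun hF x⟩

/-- Along an interval on which `exp ∘ L` times a constant stays in the slit plane, the variation
of `L` is computed by the principal logarithm. -/
theorem log_variation {L : ℝ → ℂ} {p q : ℝ} (hpq : p ≤ q) (hL : ContinuousOn L (Set.Icc p q))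
    {w : ℂ} (hw : ∀ t ∈ Set.Icc p q, exp (L t) * w ∈ slitPlane) :
    L q - L p = log (exp (L q) * w) - log (exp (L p) * w) := by
  set D : ℝ → ℂ := fun t => L t - log (exp (L t) * w) with hD
  have hDc : ContinuousOn D (Set.Icc p q) :=
    hL.sub (((continuous_exp.comp_continuousOn hL).mul continuousOn_const).clog hw)
  have hexp : ∀ t ∈ Set.Icc p q, exp (D t) = w⁻¹ := by
    intro t ht
    have h1 := slitPlane_ne_zero (hw t ht)
    have h2 : w ≠ 0 := right_ne_zero_of_mul h1
    simp only [hD, exp_sub, exp_log h1]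
    field_simp [exp_ne_zero]
  have key : D p = D q := by
    refine isPreconnected_Icc.induction₂ (fun s t => D s = D t) ?_ ?_ ?_
      (Set.left_mem_Icc.2 hpq) (Set.right_mem_Icc.2 hpq)
    · intro s hs
      have h1 := Metric.tendsto_nhds.1 (hDc s hs) (2 * Real.pi) (by positivity)
      filter_upwards [h1, self_mem_nhdsWithin] with t h2 h3
      have h4 : exp (D t) = exp (D s) := by rw [hexp t h3, hexp s hs]
      obtain ⟨n, hn⟩ := exp_eq_exp_iff_exists_int.1 h4
      rw [dist_eq_norm, hn] at h2
      have h5 : ‖(n : ℂ) * (2 * Real.pi * I)‖ = |(n : ℝ)| * (2 * Real.pi) := by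
        simp [abs_of_pos Real.pi_pos]
      rw [add_sub_cancel_left, h5] at h2
      have h6 : |(n : ℝ)| < 1 := by
        by_contra h
        push Not at h
        nlinarith [Real.pi_pos]
      have h7 : n = 0 := by
        have : |n| < 1 := by exact_mod_cast h6
        exact Int.abs_lt_one_iff.1 this
      rw [hn, h7]; simp
    · intro x y z _ _ _ h1 h2
      exact h1.trans h2
    · intro x y _ _ h
      exact h.symm
  simp only [hD] at key
  linear_combination -key

theorem arg_pos_mul_exp {r θ : ℝ} (hr : 0 < r) (h1 : -Real.pi < θ) (h2 : θ ≤ Real.pi) :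
    arg (r * exp (θ * I)) = θ := by
  rw [exp_mul_I]
  exact arg_mul_cos_add_sin_mul_I hr ⟨h1, h2⟩

theorem one_sub_exp_mul_I (φ : ℝ) :
    1 - exp (φ * I) =
      ((2 * Real.sin (φ / 2) : ℝ) : ℂ) * exp (((φ / 2 - Real.pi / 2 : ℝ) : ℂ) * I) := by
  have h : φ = 2 * (φ / 2) := by ring
  generalize φ / 2 = x at h
  subst h
  rw [exp_mul_I, exp_mul_I, ← ofReal_cos, ← ofReal_sin, ← ofReal_cos, ← ofReal_sin,
    Real.cos_sub_pi_div_two, Real.sin_sub_pi_div_two, Real.cos_two_mul, Real.sin_two_mul,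
    Real.cos_sq']
  push_cast
  ring

theorem re_sub_pos {R : ℝ} {u : ℂ} (h : ‖u‖ ≤ R) (hu : u ≠ R) : 0 < (R - u).re := by
  have h1 := re_le_norm u
  rcases lt_or_eq_of_le (h1.trans h) with h2 | h2
  · simpa using h2
  · exfalso
    have h3 : u.re = ‖u‖ := le_antisymm h1 (by linarith)
    have h4 : u.im = 0 := by
      have := Complex.sq_norm u
      rw [normSq_apply, ← h3] at this
      exact mul_self_eq_zero.1 (by linarith)
    exact hu (Complex.ext (by simpa using h2) (by simpa using h4))

/-- Hopf's secant argument: the variation of the secant direction of an arc in a disc which is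
tangent to the boundary circle at both of its endpoints. -/
theorem secant_variation {G : ℝ × ℝ → ℂ} {L : ℝ × ℝ → ℂ} {z : ℝ → ℂ} {p q R α β : ℝ}
    (hpq : p < q) (hR : 0 < R) (hL : Continuous L)
    (hLG : ∀ s t, p ≤ s → s ≤ t → t ≤ q → exp (L (s, t)) = G (s, t))
    (hsec : ∀ s t, p ≤ s → s < t → t ≤ q → ∃ k : ℝ, 0 < k ∧ G (s, t) = k * (z t - z s))
    (hz : ∀ s, p ≤ s → s ≤ q → ‖z s‖ ≤ R)
    (hp : ∃ k : ℝ, 0 < k ∧ G (p, p) = k * (I * z p))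
    (hq : ∃ k : ℝ, 0 < k ∧ G (q, q) = k * (I * z q))
    (hzp : z p = R * exp (α * I)) (hzq : z q = R * exp (β * I))
    (h1 : α < β) (h2 : β < α + 2 * Real.pi) :
    (L (q, q)).im - (L (p, p)).im = β - α := by
  have hpi := Real.pi_pos
  obtain ⟨kp, hkp, hGp⟩ := hp
  obtain ⟨kq, hkq, hGq⟩ := hq
  have hEE : ∀ x : ℝ, exp (x * I) * exp (-(x * I)) = 1 := fun x => by
    rw [← exp_add]; simp
  have hn : ∀ x : ℝ, ‖exp (-(x * I))‖ = 1 := fun x => by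
    rw [norm_exp]; simp
  have hsin : 0 < 2 * Real.sin ((β - α) / 2) := by
    have := Real.sin_pos_of_pos_of_lt_pi (x := (β - α) / 2) (by linarith) (by linarith)
    linarith
  obtain ⟨k, hk, hGpq⟩ := hsec p q le_rfl hpq le_rfl
  -- values at the three corners
  have e1 : G (p, p) * -exp (-(α * I)) =
      ((kp * R : ℝ) : ℂ) * exp (((-(Real.pi / 2) : ℝ) : ℂ) * I) := by
    rw [hGp, hzp, exp_mul_I ((-(Real.pi / 2) : ℝ) : ℂ), ← ofReal_cos, ← ofReal_sin]
    simp only [Real.cos_neg, Real.sin_neg, Real.cos_pi_div_two, Real.sin_pi_div_two]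
    push_cast
    linear_combination (-kp * I * R : ℂ) * hEE α
  have e2 : G (p, q) * -exp (-(α * I)) =
      ((k * R * (2 * Real.sin ((β - α) / 2)) : ℝ) : ℂ) *
        exp ((((β - α) / 2 - Real.pi / 2 : ℝ) : ℂ) * I) := by
    have h3 := one_sub_exp_mul_I (β - α)
    have h4 : exp (((β - α : ℝ) : ℂ) * I) = exp (β * I) * exp (-(α * I)) := by
      rw [← exp_add]; push_cast; ring_nf
    rw [h4] at h3
    rw [ofReal_mul, mul_assoc, ← h3, hGpq, hzp, hzq]
    push_cast
    linear_combination (k * R : ℂ) * hEE α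
  have e3 : G (q, q) * exp (-(β * I)) = ((kq * R : ℝ) : ℂ) * exp (((Real.pi / 2 : ℝ) : ℂ) * I) := by
    rw [hGq, hzq, exp_mul_I ((Real.pi / 2 : ℝ) : ℂ), ← ofReal_cos, ← ofReal_sin]
    simp only [Real.cos_pi_div_two, Real.sin_pi_div_two]
    push_cast
    linear_combination (kq * I * R : ℂ) * hEE β
  have e4 : G (p, q) * exp (-(β * I)) =
      ((k * R * (2 * Real.sin ((β - α) / 2)) : ℝ) : ℂ) *
        exp (((Real.pi / 2 - (β - α) / 2 : ℝ) : ℂ) * I) := by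
    have h3 := one_sub_exp_mul_I (α - β)
    have h4 : exp (((α - β : ℝ) : ℂ) * I) = exp (α * I) * exp (-(β * I)) := by
      rw [← exp_add]; push_cast; ring_nf
    have h5 : Real.sin ((α - β) / 2) = -Real.sin ((β - α) / 2) := by
      rw [← Real.sin_neg]; ring_nf
    have h6 : exp ((((α - β) / 2 - Real.pi / 2 : ℝ) : ℂ) * I) =
        -exp (((Real.pi / 2 - (β - α) / 2 : ℝ) : ℂ) * I) := by
      have : (((α - β) / 2 - Real.pi / 2 : ℝ) : ℂ) * I =
        ((Real.pi / 2 - (β - α) / 2 : ℝ) : ℂ) * I - Real.pi * I := by push_cast; ring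
      rw [this, exp_sub, exp_pi_mul_I, div_neg, div_one]
    rw [h4, h5, h6] at h3
    rw [ofReal_mul, mul_assoc]
    have h7 : (1 : ℂ) - exp (α * I) * exp (-(β * I)) = ((2 * Real.sin ((β - α) / 2) : ℝ) : ℂ) *
        exp (((Real.pi / 2 - (β - α) / 2 : ℝ) : ℂ) * I) := by
      rw [h3]; push_cast; ring
    rw [← h7, hGpq, hzp, hzq]
    push_cast
    linear_combination (k * R : ℂ) * hEE β
  have hne : ∀ s t, p ≤ s → s ≤ t → t ≤ q → G (s, t) ≠ 0 := fun s t a b c => by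
    rw [← hLG s t a b c]; exact exp_ne_zero _
  have hslit : ∀ x : ℝ, 0 < x →
      ((x : ℝ) : ℂ) * exp (((-(Real.pi / 2) : ℝ) : ℂ) * I) ∈ slitPlane := by
    intro x hx
    rw [mem_slitPlane_iff_arg, arg_pos_mul_exp hx (by linarith) (by linarith)]
    exact ⟨by linarith, mul_ne_zero (by exact_mod_cast hx.ne') (exp_ne_zero _)⟩
  have hslit' : ∀ x : ℝ, 0 < x → ((x : ℝ) : ℂ) * exp (((Real.pi / 2 : ℝ) : ℂ) * I) ∈ slitPlane := by
    intro x hx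
    rw [mem_slitPlane_iff_arg, arg_pos_mul_exp hx (by linarith) (by linarith)]
    exact ⟨by linarith, mul_ne_zero (by exact_mod_cast hx.ne') (exp_ne_zero _)⟩
  have leg1 := log_variation (L := fun t => L (p, t)) hpq.le
    (by fun_prop) (w := -exp (-(α * I))) (by
      intro t ht
      rw [hLG p t le_rfl ht.1 ht.2]
      rcases eq_or_lt_of_le ht.1 with rfl | h
      · rw [e1]; exact hslit _ (by positivity)
      · obtain ⟨k', hk', hG'⟩ := hsec p t le_rfl h ht.2
        have h3 : G (p, t) * -exp (-(α * I)) = k' * (R - z t * exp (-(α * I))) := by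
          rw [hG', hzp]; linear_combination (k' * R : ℂ) * hEE α
        have h4 : z t * exp (-(α * I)) ≠ R := by
          intro h5
          have h6 := hne p t le_rfl ht.1 ht.2
          rw [h5, sub_self, mul_zero, mul_eq_zero, neg_eq_zero] at h3
          exact h3.elim h6 (exp_ne_zero _)
        have h5 := re_sub_pos (u := z t * exp (-(α * I))) (R := R)
          (by rw [norm_mul, hn, mul_one]; exact hz t ht.1 ht.2) h4
        rw [h3, mem_slitPlane_iff, re_ofReal_mul]
        exact Or.inl (mul_pos hk' h5))
  have leg2 := log_variation (L := fun s => L (s, q)) hpq.le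
    (by fun_prop) (w := exp (-(β * I))) (by
      intro s hs
      rw [hLG s q hs.1 hs.2 le_rfl]
      rcases eq_or_lt_of_le hs.2 with rfl | h
      · rw [e3]; exact hslit' _ (by positivity)
      · obtain ⟨k', hk', hG'⟩ := hsec s q hs.1 h le_rfl
        have h3 : G (s, q) * exp (-(β * I)) = k' * (R - z s * exp (-(β * I))) := by
          rw [hG', hzq]; linear_combination (k' * R : ℂ) * hEE β
        have h4 : z s * exp (-(β * I)) ≠ R := by
          intro h5
          have h6 := hne s q hs.1 hs.2 le_rfl
          rw [h5, sub_self, mul_zero, mul_eq_zero] at h3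
          exact h3.elim h6 (exp_ne_zero _)
        have h5 := re_sub_pos (u := z s * exp (-(β * I))) (R := R)
          (by rw [norm_mul, hn, mul_one]; exact hz s hs.1 hs.2) h4
        rw [h3, mem_slitPlane_iff, re_ofReal_mul]
        exact Or.inl (mul_pos hk' h5))
  rw [hLG p q le_rfl hpq.le le_rfl] at leg1 leg2
  rw [hLG p p le_rfl le_rfl hpq.le, e1, e2] at leg1
  rw [hLG q q hpq.le le_rfl le_rfl, e3, e4] at leg2
  have i1 := congrArg Complex.im leg1
  have i2 := congrArg Complex.im leg2
  simp only [sub_im, log_im] at i1 i2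
  rw [arg_pos_mul_exp (by positivity) (by linarith) (by linarith),
    arg_pos_mul_exp (by positivity) (by linarith) (by linarith)] at i1 i2
  linarith

/-- An embedded arc in a closed disc which is tangent to the boundary circle, with the same
orientation, at three points visits these points in their cyclic order. -/
theorem tangent_cyclic_order {G : ℝ × ℝ → ℂ} {z : ℝ → ℂ} {p m q R α β : ℝ}
    (hpm : p < m) (hmq : m < q) (hR : 0 < R) (hG : Continuous G)
    (hG0 : ∀ s t, p ≤ s → s ≤ t → t ≤ q → G (s, t) ≠ 0)
    (hsec : ∀ s t, p ≤ s → s < t → t ≤ q → ∃ k : ℝ, 0 < k ∧ G (s, t) = k * (z t - z s))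
    (hz : ∀ s, p ≤ s → s ≤ q → ‖z s‖ ≤ R)
    (hp : ∃ k : ℝ, 0 < k ∧ G (p, p) = k * (I * z p))
    (hm : ∃ k : ℝ, 0 < k ∧ G (m, m) = k * (I * z m))
    (hq : ∃ k : ℝ, 0 < k ∧ G (q, q) = k * (I * z q))
    (hzp : z p = R) (hzm : z m = R * exp (α * I)) (hzq : z q = R * exp (β * I))
    (h0 : 0 < β) (h1 : β < α) (h2 : α < 2 * Real.pi) : False := by
  let c : ℝ → ℝ := fun x => max p (min x q)
  have hcc : Continuous c := by fun_prop
  obtain ⟨L, hL, hexp⟩ := exists_continuous_log (fun x => G (min (c x.1) (c x.2), c x.2))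
    (by fun_prop) (fun x => hG0 _ _ (le_min (le_max_left _ _) (le_max_left _ _)) (min_le_right _ _)
      (max_le (hpm.trans hmq).le (min_le_right _ _)))
  have hc : ∀ x, p ≤ x → x ≤ q → c x = x := fun x h3 h4 => by
    simp [c, h3, h4]
  have hLG : ∀ s t, p ≤ s → s ≤ t → t ≤ q → exp (L (s, t)) = G (s, t) := by
    intro s t h3 h4 h5
    rw [hexp]
    simp only
    rw [hc s h3 (h4.trans h5), hc t (h3.trans h4) h5, min_eq_left h4]
  have v1 := secant_variation (α := 0) (β := α) hpm hR hL
    (fun s t a b d => hLG s t a b (d.trans hmq.le)) (fun s t a b d => hsec s t a b (d.trans hmq.le))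
    (fun s a b => hz s a (b.trans hmq.le)) hp hm (by simpa using hzp) hzm (by linarith)
    (by linarith)
  have v2 := secant_variation (α := α) (β := β + 2 * Real.pi) hmq hR hL
    (fun s t a b d => hLG s t (hpm.le.trans a) b d) (fun s t a b d => hsec s t (hpm.le.trans a) b d)
    (fun s a b => hz s (hpm.le.trans a) b) hm hq hzm (by
      rw [hzq]; push_cast
      rw [add_mul, exp_add, exp_two_pi_mul_I, mul_one]) (by linarith) (by linarith)
  have v3 := secant_variation (α := 0) (β := β) (hpm.trans hmq) hR hL hLG hsec hz hp hq
    (by simpa using hzp) hzq h0 (by linarith)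
  linarith [Real.pi_pos]

end Topology

section VectorAlgebra

theorem dot3_comm (x y : R3) : dot3 x y = dot3 y x := by simp only [dot3]; ring

theorem dot3_add (x y z : R3) : dot3 x (y + z) = dot3 x y + dot3 x z := by
  simp only [dot3, Pi.add_apply]; ring

theorem add_dot3 (x y z : R3) : dot3 (x + y) z = dot3 x z + dot3 y z := by
  simp only [dot3, Pi.add_apply]; ring

theorem dot3_sub (x y z : R3) : dot3 x (y - z) = dot3 x y - dot3 x z := by
  simp only [dot3, Pi.sub_apply]; ring

theorem sub_dot3 (x y z : R3) : dot3 (x - y) z = dot3 x z - dot3 y z := by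
  simp only [dot3, Pi.sub_apply]; ring

theorem dot3_smul (c : ℝ) (x y : R3) : dot3 x (c • y) = c * dot3 x y := by
  simp only [dot3, Pi.smul_apply, smul_eq_mul]; ring

theorem smul_dot3 (c : ℝ) (x y : R3) : dot3 (c • x) y = c * dot3 x y := by
  simp only [dot3, Pi.smul_apply, smul_eq_mul]; ring

theorem cross3_smul (c : ℝ) (x y : R3) : cross3 x (c • y) = c • cross3 x y := by
  ext i; fin_cases i <;> simp [cross3] <;> ring

theorem dot3_cross3_left (x y : R3) : dot3 x (cross3 x y) = 0 := by
  simp [dot3, cross3]; ring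

theorem dot3_cross3_right (x y : R3) : dot3 y (cross3 x y) = 0 := by
  simp [dot3, cross3]; ring

theorem dot3_self_nonneg (x : R3) : 0 ≤ dot3 x x := by
  simp only [dot3]
  nlinarith [mul_self_nonneg (x 0), mul_self_nonneg (x 1), mul_self_nonneg (x 2)]

theorem dot3_self_eq_zero {x : R3} : dot3 x x = 0 ↔ x = 0 := by
  constructor
  · intro h
    simp only [dot3] at h
    have h0 := mul_self_nonneg (x 0)
    have h1 := mul_self_nonneg (x 1)
    have h2 := mul_self_nonneg (x 2)
    ext i
    fin_cases i
    · show x 0 = 0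
      exact mul_self_eq_zero.1 (by linarith)
    · show x 1 = 0
      exact mul_self_eq_zero.1 (by linarith)
    · show x 2 = 0
      exact mul_self_eq_zero.1 (by linarith)
  · rintro rfl; simp [dot3]

theorem norm3_pos {x : R3} (hx : x ≠ 0) : 0 < norm3 x :=
  Real.sqrt_pos.2 (lt_of_le_of_ne (dot3_self_nonneg x) (Ne.symm (mt dot3_self_eq_zero.1 hx)))

theorem norm3_mul_self (x : R3) : norm3 x * norm3 x = dot3 x x :=
  Real.mul_self_sqrt (dot3_self_nonneg x)

/-- Two points of the sphere with scalar product at least one coincide. -/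
theorem dot3_lt_one {x y : R3} (hx : dot3 x x = 1) (hy : dot3 y y = 1) (h : x ≠ y) :
    dot3 x y < 1 := by
  have h1 : dot3 (x - y) (x - y) = 2 - 2 * dot3 x y := by
    rw [dot3_sub, sub_dot3, sub_dot3, hx, hy, dot3_comm y x]; ring
  have h2 : 0 < dot3 (x - y) (x - y) :=
    lt_of_le_of_ne (dot3_self_nonneg _) (Ne.symm (mt dot3_self_eq_zero.1 (sub_ne_zero.2 h)))
  linarith

theorem dot3_frame {g T : R3} (hg : dot3 g g = 1) (hT : dot3 T T = 1) (hgT : dot3 g T = 0)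
    (x y : R3) : dot3 x y = dot3 x g * dot3 y g + dot3 x T * dot3 y T +
      dot3 x (cross3 g T) * dot3 y (cross3 g T) := by
  have h : dot3 x (cross3 g T) * dot3 y (cross3 g T) =
      dot3 x y * (dot3 g g * dot3 T T - dot3 g T * dot3 g T)
      - dot3 x g * (dot3 y g * dot3 T T - dot3 g T * dot3 y T)
      + dot3 x T * (dot3 y g * dot3 g T - dot3 g g * dot3 y T) := by
    simp [dot3, cross3]; ring
  rw [hg, hT, hgT] at h
  linarith

theorem cross3_unit {g T : R3} (hg : dot3 g g = 1) (hT : dot3 T T = 1) (hgT : dot3 g T = 0) :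
    dot3 (cross3 g T) (cross3 g T) = 1 := by
  have h : dot3 (cross3 g T) (cross3 g T) = dot3 g g * dot3 T T - dot3 g T * dot3 g T := by
    simp [dot3, cross3]; ring
  rw [h, hg, hT, hgT]; ring

theorem det3_frame {g T : R3} (hg : dot3 g g = 1) (hT : dot3 T T = 1) (hgT : dot3 g T = 0)
    (x y z : R3) : det3 x y z =
      dot3 x g * (dot3 y T * dot3 z (cross3 g T) - dot3 y (cross3 g T) * dot3 z T)
      - dot3 x T * (dot3 y g * dot3 z (cross3 g T) - dot3 y (cross3 g T) * dot3 z g)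
      + dot3 x (cross3 g T) * (dot3 y g * dot3 z T - dot3 y T * dot3 z g) := by
  have h : ∀ n : R3, det3 x y z * det3 g T n =
      dot3 x g * (dot3 y T * dot3 z n - dot3 y n * dot3 z T)
      - dot3 x T * (dot3 y g * dot3 z n - dot3 y n * dot3 z g)
      + dot3 x n * (dot3 y g * dot3 z T - dot3 y T * dot3 z g) := by
    intro n; simp [det3, dot3, cross3]; ring
  have h1 : det3 g T (cross3 g T) = 1 := by
    rw [← cross3_unit hg hT hgT]; simp [det3, dot3, cross3]; ring
  rw [← h, h1, mul_one]

/-- The real part of the Bargmann invariant of three points of the sphere. -/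
def bargmannRe (x y g : R3) : ℝ := 1 - dot3 x g - dot3 y g + dot3 x y

theorem bargmann_normSq {x y g T : R3} (hx : dot3 x x = 1) (hy : dot3 y y = 1)
    (hg : dot3 g g = 1) (hT : dot3 T T = 1) (hgT : dot3 g T = 0) :
    bargmannRe x y g ^ 2 + det3 x g y ^ 2 =
      2 * (1 - dot3 x g) * (1 - dot3 y g) * (1 + dot3 x y) := by
  have hTg : dot3 T g = 0 := by rw [dot3_comm, hgT]
  rw [bargmannRe, det3_frame hg hT hgT, hg, hgT, dot3_cross3_left, dot3_frame hg hT hgT x y]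
  rw [dot3_frame hg hT hgT] at hx hy
  generalize dot3 x g = x1 at *
  generalize dot3 x T = x2 at *
  generalize dot3 x (cross3 g T) = x3 at *
  generalize dot3 y g = y1 at *
  generalize dot3 y T = y2 at *
  generalize dot3 y (cross3 g T) = y3 at *
  linear_combination (y2 ^ 2 + y3 ^ 2) * hx + (1 - x1 ^ 2) * hy

theorem bargmann_deriv {x y g T : R3} (hx : dot3 x x = 1) (hy : dot3 y y = 1)
    (hg : dot3 g g = 1) (hT : dot3 T T = 1) (hgT : dot3 g T = 0) :
    bargmannRe x y g * det3 x T y + det3 x g y * (dot3 x T + dot3 y T) =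
      (1 + dot3 x y) * (det3 x g T * (1 - dot3 y g) - det3 y g T * (1 - dot3 x g)) := by
  have hTg : dot3 T g = 0 := by rw [dot3_comm, hgT]
  rw [bargmannRe, det3_frame hg hT hgT x T y, det3_frame hg hT hgT x g y, det3, det3, hg, hT,
    hTg, hgT, dot3_cross3_left, dot3_cross3_right, dot3_frame hg hT hgT x y]
  rw [dot3_frame hg hT hgT] at hx hy
  generalize dot3 x g = x1 at *
  generalize dot3 x T = x2 at *
  generalize dot3 x (cross3 g T) = x3 at *
  generalize dot3 y g = y1 at *
  generalize dot3 y T = y2 at *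
  generalize dot3 y (cross3 g T) = y3 at *
  linear_combination (-y3) * hx + x3 * hy

end VectorAlgebra

section Calculus

@[fun_prop]
theorem Continuous.dot3 {X : Type*} [TopologicalSpace X] {f g : X → R3} (hf : Continuous f)
    (hg : Continuous g) : Continuous fun x => dot3 (f x) (g x) := by
  unfold _root_.dot3; fun_prop

@[fun_prop]
theorem Continuous.cross3 {X : Type*} [TopologicalSpace X] {f g : X → R3} (hf : Continuous f)
    (hg : Continuous g) : Continuous fun x => cross3 (f x) (g x) := by
  unfold _root_.cross3
  refine continuous_pi fun i => ?_
  fin_cases i <;> simp <;> fun_prop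

@[fun_prop]
theorem ContDiff.dot3 {n : WithTop ℕ∞} {f g : ℝ → R3} (hf : ContDiff ℝ n f)
    (hg : ContDiff ℝ n g) : ContDiff ℝ n fun x => dot3 (f x) (g x) := by
  unfold _root_.dot3; fun_prop

@[fun_prop]
theorem ContDiff.cross3 {n : WithTop ℕ∞} {f g : ℝ → R3} (hf : ContDiff ℝ n f)
    (hg : ContDiff ℝ n g) : ContDiff ℝ n fun x => cross3 (f x) (g x) := by
  unfold _root_.cross3
  refine contDiff_pi.2 fun i => ?_
  fin_cases i <;> simp <;> fun_prop

theorem HasDerivAt.dot3 {f g : ℝ → R3} {f' g' : R3} {u : ℝ} (hf : HasDerivAt f f' u)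
    (hg : HasDerivAt g g' u) :
    HasDerivAt (fun x => dot3 (f x) (g x)) (dot3 f' (g u) + dot3 (f u) g') u := by
  have hf := hasDerivAt_pi.1 hf
  have hg := hasDerivAt_pi.1 hg
  unfold _root_.dot3
  convert! (((hf 0).mul (hg 0)).add ((hf 1).mul (hg 1))).add ((hf 2).mul (hg 2)) using 1
  ring

theorem HasDerivAt.dot3_const {f : ℝ → R3} {f' : R3} {u : ℝ} (hf : HasDerivAt f f' u) (x : R3) :
    HasDerivAt (fun u => _root_.dot3 (f u) x) (_root_.dot3 f' x) u := by
  have := hf.dot3 (hasDerivAt_const u x)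
  simpa [_root_.dot3] using this

theorem HasDerivAt.const_dot3 {f : ℝ → R3} {f' : R3} {u : ℝ} (hf : HasDerivAt f f' u) (x : R3) :
    HasDerivAt (fun u => _root_.dot3 x (f u)) (_root_.dot3 x f') u := by
  simpa only [dot3_comm x] using hf.dot3_const x

end Calculus

/-- The unit tangent vector of a curve. -/
def unitTangent (γ : ℝ → R3) (s : ℝ) : R3 := (norm3 (deriv γ s))⁻¹ • deriv γ s

section Frame

namespace IsRegularCurve

variable {γ : ℝ → R3}

theorem hasDerivAt (h : IsRegularCurve γ) (s : ℝ) : HasDerivAt γ (deriv γ s) s :=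
  (h.smooth.differentiable (by simp) s).hasDerivAt

theorem contDiff_deriv (h : IsRegularCurve γ) : ContDiff ℝ (⊤ : ℕ∞) (deriv γ) := by
  have := h.smooth
  exact (contDiff_infty_iff_deriv.1 this).2

theorem speed_pos (h : IsRegularCurve γ) (s : ℝ) : 0 < norm3 (deriv γ s) := norm3_pos (h.reg s)

theorem contDiff_speed (h : IsRegularCurve γ) :
    ContDiff ℝ (⊤ : ℕ∞) fun s => norm3 (deriv γ s) := by
  refine ContDiff.sqrt (h.contDiff_deriv.dot3 h.contDiff_deriv) fun s => ?_
  rw [← norm3_mul_self]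
  exact (mul_pos (h.speed_pos s) (h.speed_pos s)).ne'

theorem contDiff_unitTangent (h : IsRegularCurve γ) : ContDiff ℝ (⊤ : ℕ∞) (unitTangent γ) :=
  (h.contDiff_speed.inv fun s => (h.speed_pos s).ne').smul h.contDiff_deriv

theorem unitNormal_eq (γ : ℝ → R3) (s : ℝ) : unitNormal γ s = cross3 (γ s) (unitTangent γ s) := by
  rw [unitTangent, cross3_smul, unitNormal]

theorem contDiff_unitNormal (h : IsRegularCurve γ) : ContDiff ℝ (⊤ : ℕ∞) (unitNormal γ) := by
  rw [funext (unitNormal_eq γ)]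
  exact h.smooth.cross3 h.contDiff_unitTangent

theorem deriv_eq (h : IsRegularCurve γ) (s : ℝ) :
    deriv γ s = norm3 (deriv γ s) • unitTangent γ s := by
  rw [unitTangent, smul_smul, mul_inv_cancel₀ (h.speed_pos s).ne', one_smul]

theorem dot3_deriv (h : IsRegularCurve γ) (s : ℝ) : dot3 (γ s) (deriv γ s) = 0 := by
  have h1 := (h.hasDerivAt s).dot3 (h.hasDerivAt s)
  rw [funext h.sphere] at h1
  have h2 := h1.unique (hasDerivAt_const s (1 : ℝ))
  rw [dot3_comm (deriv γ s)] at h2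
  linarith

theorem dot3_tangent (h : IsRegularCurve γ) (s : ℝ) : dot3 (γ s) (unitTangent γ s) = 0 := by
  rw [unitTangent, dot3_smul, h.dot3_deriv, mul_zero]

theorem tangent_unit (h : IsRegularCurve γ) (s : ℝ) :
    dot3 (unitTangent γ s) (unitTangent γ s) = 1 := by
  have := (h.speed_pos s).ne'
  rw [unitTangent, dot3_smul, smul_dot3, ← norm3_mul_self]
  field_simp

theorem normal_unit (h : IsRegularCurve γ) (s : ℝ) :
    dot3 (unitNormal γ s) (unitNormal γ s) = 1 := by
  rw [unitNormal_eq]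
  exact cross3_unit (h.sphere s) (h.tangent_unit s) (h.dot3_tangent s)

theorem dot3_normal (γ : ℝ → R3) (s : ℝ) : dot3 (γ s) (unitNormal γ s) = 0 := by
  rw [unitNormal_eq, dot3_cross3_left]

theorem tangent_normal (γ : ℝ → R3) (s : ℝ) :
    dot3 (unitTangent γ s) (unitNormal γ s) = 0 := by
  rw [unitNormal_eq, dot3_cross3_right]

theorem deriv_normal (h : IsRegularCurve γ) (s : ℝ) : dot3 (deriv γ s) (unitNormal γ s) = 0 := by
  rw [h.deriv_eq, smul_dot3, tangent_normal, mul_zero]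

theorem deriv_tangent (h : IsRegularCurve γ) (s : ℝ) :
    dot3 (deriv γ s) (unitTangent γ s) = norm3 (deriv γ s) := by
  nth_rw 1 [h.deriv_eq]
  rw [smul_dot3, h.tangent_unit, mul_one]

theorem frame (h : IsRegularCurve γ) (s : ℝ) (x y : R3) :
    dot3 x y = dot3 x (γ s) * dot3 y (γ s) + dot3 x (unitTangent γ s) * dot3 y (unitTangent γ s) +
      dot3 x (unitNormal γ s) * dot3 y (unitNormal γ s) := by
  rw [unitNormal_eq]
  exact dot3_frame (h.sphere s) (h.tangent_unit s) (h.dot3_tangent s) x y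

theorem ext_frame (h : IsRegularCurve γ) (s : ℝ) {x y : R3} (h1 : dot3 x (γ s) = dot3 y (γ s))
    (h2 : dot3 x (unitTangent γ s) = dot3 y (unitTangent γ s))
    (h3 : dot3 x (unitNormal γ s) = dot3 y (unitNormal γ s)) : x = y := by
  rw [← sub_eq_zero, ← dot3_self_eq_zero, h.frame s, sub_dot3, sub_dot3, sub_dot3, h1, h2, h3]
  ring

theorem hasDerivAt_deriv (h : IsRegularCurve γ) (s : ℝ) :
    HasDerivAt (deriv γ) (deriv (deriv γ) s) s :=
  (h.contDiff_deriv.differentiable (by simp) s).hasDerivAt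

theorem second_deriv_point (h : IsRegularCurve γ) (s : ℝ) :
    dot3 (deriv (deriv γ) s) (γ s) = -norm3 (deriv γ s) ^ 2 := by
  have h1 := (h.hasDerivAt s).dot3 (h.hasDerivAt_deriv s)
  rw [funext h.dot3_deriv] at h1
  have h2 := h1.unique (hasDerivAt_const s (0 : ℝ))
  rw [dot3_comm (γ s)] at h2
  rw [pow_two, norm3_mul_self]
  linarith

theorem second_deriv_normal (h : IsRegularCurve γ) (s : ℝ) :
    dot3 (deriv (deriv γ) s) (unitNormal γ s) = kappa γ s * norm3 (deriv γ s) ^ 2 := by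
  have h1 : det3 (γ s) (deriv γ s) (deriv (deriv γ) s) =
      dot3 (deriv (deriv γ) s) (cross3 (γ s) (deriv γ s)) := by
    simp [det3, dot3, cross3]; ring
  have := (h.speed_pos s).ne'
  rw [kappa, h1, unitNormal, dot3_smul]
  field_simp

theorem hasDerivAt_normal (h : IsRegularCurve γ) (s : ℝ) :
    HasDerivAt (unitNormal γ) (-kappa γ s • deriv γ s) s := by
  have hn : HasDerivAt (unitNormal γ) (deriv (unitNormal γ) s) s :=
    (h.contDiff_unitNormal.differentiable (by simp) s).hasDerivAt
  convert hn using 1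
  have e1 := hn.dot3 hn
  rw [funext h.normal_unit] at e1
  replace e1 := e1.unique (hasDerivAt_const s (1 : ℝ))
  rw [dot3_comm (unitNormal γ s)] at e1
  have e2 := (h.hasDerivAt s).dot3 hn
  rw [funext (dot3_normal γ)] at e2
  replace e2 := e2.unique (hasDerivAt_const s (0 : ℝ))
  rw [h.deriv_normal] at e2
  have e3 := (h.hasDerivAt_deriv s).dot3 hn
  rw [funext h.deriv_normal] at e3
  replace e3 := e3.unique (hasDerivAt_const s (0 : ℝ))
  rw [h.second_deriv_normal, h.deriv_eq, smul_dot3, ← h.deriv_eq] at e3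
  have hv := (h.speed_pos s).ne'
  refine h.ext_frame s ?_ ?_ ?_
  · rw [smul_dot3, dot3_comm _ (γ s), h.dot3_deriv, dot3_comm _ (γ s)]
    linarith
  · rw [smul_dot3, h.deriv_tangent, dot3_comm (deriv _ _)]
    refine mul_left_cancel₀ hv ?_
    linarith
  · rw [smul_dot3, h.deriv_normal]
    linarith

theorem hasDerivAt_center (h : IsRegularCurve γ) (μ s : ℝ) :
    HasDerivAt (tangentCenter μ γ)
      (((Real.sqrt (1 + μ ^ 2))⁻¹ * (μ - kappa γ s)) • deriv γ s) s := by
  have := (((h.hasDerivAt s).const_smul μ).add (h.hasDerivAt_normal s)).const_smul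
    (Real.sqrt (1 + μ ^ 2))⁻¹
  convert! this using 1
  rw [← add_smul, smul_smul, sub_eq_add_neg]

theorem sqrt_mu_pos (μ : ℝ) : 0 < Real.sqrt (1 + μ ^ 2) := Real.sqrt_pos.2 (by positivity)

theorem dot3_center (h : IsRegularCurve γ) (μ s : ℝ) :
    dot3 (γ s) (tangentCenter μ γ s) = μ / Real.sqrt (1 + μ ^ 2) := by
  rw [tangentCenter, dot3_smul, dot3_add, dot3_smul, h.sphere, dot3_normal]
  field_simp; ring

theorem tangent_center (h : IsRegularCurve γ) (μ s : ℝ) :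
    dot3 (unitTangent γ s) (tangentCenter μ γ s) = 0 := by
  rw [tangentCenter, dot3_smul, dot3_add, dot3_smul, tangent_normal, dot3_comm, h.dot3_tangent]
  ring

theorem normal_center (h : IsRegularCurve γ) (μ s : ℝ) :
    dot3 (unitNormal γ s) (tangentCenter μ γ s) = (Real.sqrt (1 + μ ^ 2))⁻¹ := by
  rw [tangentCenter, dot3_smul, dot3_add, dot3_smul, h.normal_unit, dot3_comm, dot3_normal]
  ring

theorem center_unit (h : IsRegularCurve γ) (μ s : ℝ) :
    dot3 (tangentCenter μ γ s) (tangentCenter μ γ s) = 1 := by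
  have h0 := sqrt_mu_pos μ
  have h1 : Real.sqrt (1 + μ ^ 2) ^ 2 = 1 + μ ^ 2 := Real.sq_sqrt (by positivity)
  rw [h.frame s, dot3_comm _ (γ s), dot3_comm _ (unitTangent γ s), dot3_comm _ (unitNormal γ s),
    h.dot3_center, h.tangent_center, h.normal_center]
  field_simp
  rw [h1]; ring

theorem continuous_center (h : IsRegularCurve γ) (μ : ℝ) : Continuous (tangentCenter μ γ) :=
  continuous_iff_continuousAt.2 fun s => (h.hasDerivAt_center μ s).continuousAt

end IsRegularCurve

end Frame

section Index

open Filter Topology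

theorem HasDerivAt.complex_im {f : ℝ → ℂ} {f' : ℂ} {u : ℝ} (h : HasDerivAt f f' u) :
    HasDerivAt (fun u => (f u).im) f'.im u :=
  Complex.imCLM.hasFDerivAt.comp_hasDerivAt u h

/-- The density of the spherical winding form around `x`. -/
def windingDensity (γ : ℝ → R3) (x : R3) (u : ℝ) : ℝ :=
  det3 x (γ u) (deriv γ u) / (1 - dot3 x (γ u))

/-- The spherical winding integral of an arc around `x`; it is locally constant off the arc
as soon as the arc is closed. -/
def windingIntegral (γ : ℝ → R3) (a b : ℝ) (x : R3) : ℝ :=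
  ∫ u in a..b, windingDensity γ x u

/-- The Bargmann invariant of `x`, `y` and a point of the curve. -/
def bargmann (γ : ℝ → R3) (x y : R3) (u : ℝ) : ℂ :=
  bargmannRe x y (γ u) + det3 x (γ u) y * Complex.I

@[simp] theorem bargmann_re (γ : ℝ → R3) (x y : R3) (u : ℝ) :
    (bargmann γ x y u).re = bargmannRe x y (γ u) := by simp [bargmann]

@[simp] theorem bargmann_im (γ : ℝ → R3) (x y : R3) (u : ℝ) :
    (bargmann γ x y u).im = det3 x (γ u) y := by simp [bargmann]

theorem det3_swap (x y z : R3) : det3 x y z = dot3 y (cross3 z x) := by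
  simp [det3, dot3, cross3]; ring

variable {γ : ℝ → R3} {a b : ℝ}

theorem IsRegularCurve.hasDerivAt_bargmann (h : IsRegularCurve γ) (x y : R3) (u : ℝ) :
    HasDerivAt (bargmann γ x y)
      ((-dot3 x (deriv γ u) - dot3 y (deriv γ u) : ℝ) + (det3 x (deriv γ u) y : ℝ) * Complex.I)
      u := by
  have hγ := h.hasDerivAt u
  have h1 : HasDerivAt (fun u => bargmannRe x y (γ u))
      (-dot3 x (deriv γ u) - dot3 y (deriv γ u)) u := by
    have := (((hasDerivAt_const u (1 : ℝ)).sub (hγ.const_dot3 x)).sub (hγ.const_dot3 y)).add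
      (hasDerivAt_const u (dot3 x y))
    convert! this using 1
    ring
  have h2 : HasDerivAt (fun u => det3 x (γ u) y) (det3 x (deriv γ u) y) u := by
    simp only [det3_swap x]
    exact hγ.dot3_const _
  exact h1.ofReal_comp.add (h2.ofReal_comp.mul_const Complex.I)

theorem IsRegularCurve.continuous_bargmann (h : IsRegularCurve γ) (x y : R3) :
    Continuous (bargmann γ x y) :=
  continuous_iff_continuousAt.2 fun u => (h.hasDerivAt_bargmann x y u).continuousAt

theorem IsRegularCurve.hasDerivAt_arg_bargmann (h : IsRegularCurve γ) {x y : R3} {u : ℝ}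
    (hx : dot3 x x = 1) (hy : dot3 y y = 1) (hxu : dot3 x (γ u) < 1) (hyu : dot3 y (γ u) < 1)
    (hxy : 0 < 1 + dot3 x y) (hs : bargmann γ x y u ∈ Complex.slitPlane) :
    HasDerivAt (fun u => (bargmann γ x y u).arg)
      (1 / 2 * (windingDensity γ x u - windingDensity γ y u)) u := by
  have h1 := ((h.hasDerivAt_bargmann x y u).clog_real hs).complex_im
  simp only [Complex.log_im] at h1
  convert h1 using 1
  have hN := bargmann_normSq hx hy (h.sphere u) (h.tangent_unit u) (h.dot3_tangent u)
  have hD := bargmann_deriv hx hy (h.sphere u) (h.tangent_unit u) (h.dot3_tangent u)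
  rw [Complex.div_im]
  have hn : Complex.normSq (bargmann γ x y u) = bargmannRe x y (γ u) ^ 2 + det3 x (γ u) y ^ 2 := by
    rw [Complex.normSq_apply, bargmann_re, bargmann_im]; ring
  rw [hn, hN, bargmann_re, bargmann_im]
  have e1 : ∀ w : R3, dot3 w (deriv γ u) = norm3 (deriv γ u) * dot3 w (unitTangent γ u) := by
    intro w; rw [← dot3_smul, ← h.deriv_eq]
  have e2 : det3 x (deriv γ u) y = norm3 (deriv γ u) * det3 x (unitTangent γ u) y := by
    rw [det3_swap, det3_swap, ← smul_dot3, ← h.deriv_eq]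
  have e3 : ∀ w : R3, det3 w (γ u) (deriv γ u) =
      norm3 (deriv γ u) * det3 w (γ u) (unitTangent γ u) := by
    intro w; rw [det3, det3, ← dot3_smul, ← cross3_smul, ← h.deriv_eq]
  simp only [windingDensity, e1, e2, e3, Complex.add_re, Complex.add_im, Complex.ofReal_re,
    Complex.ofReal_im, Complex.mul_re, Complex.mul_im, Complex.I_re, Complex.I_im]
  have p1 : 1 - dot3 x (γ u) ≠ 0 := by linarith
  have p2 : 1 - dot3 y (γ u) ≠ 0 := by linarith
  field_simp
  linear_combination (-norm3 (deriv γ u)) * hD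

theorem IsRegularCurve.continuousOn_windingDensity (h : IsRegularCurve γ) {x : R3}
    (hx : ∀ u ∈ Set.Icc a b, dot3 x (γ u) < 1) :
    ContinuousOn (windingDensity γ x) (Set.Icc a b) := by
  have hγ := h.smooth.continuous
  have hγ' := h.contDiff_deriv.continuous
  refine ContinuousOn.div ?_ ?_ fun u hu => by linarith [hx u hu]
  · unfold det3
    exact (continuous_const.dot3 (hγ.cross3 hγ')).continuousOn
  · exact (continuous_const.sub (continuous_const.dot3 hγ)).continuousOn

theorem IsRegularCurve.windingIntegral_eq (h : IsRegularCurve γ) (hab : a ≤ b)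
    (hclosed : γ a = γ b) {x y : R3} (hx : dot3 x x = 1) (hy : dot3 y y = 1)
    (hxu : ∀ u ∈ Set.Icc a b, dot3 x (γ u) < 1) (hyu : ∀ u ∈ Set.Icc a b, dot3 y (γ u) < 1)
    (hxy : 0 < 1 + dot3 x y) (hs : ∀ u ∈ Set.Icc a b, 0 < bargmannRe x y (γ u)) :
    windingIntegral γ a b x = windingIntegral γ a b y := by
  have ix : IntervalIntegrable (windingDensity γ x) MeasureTheory.volume a b :=
    (h.continuousOn_windingDensity hxu).intervalIntegrable_of_Icc hab
  have iy : IntervalIntegrable (windingDensity γ y) MeasureTheory.volume a b :=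
    (h.continuousOn_windingDensity hyu).intervalIntegrable_of_Icc hab
  have key := intervalIntegral.integral_eq_sub_of_hasDerivAt
    (f := fun u => (bargmann γ x y u).arg)
    (f' := fun u => 1 / 2 * (windingDensity γ x u - windingDensity γ y u)) (a := a) (b := b)
    (fun u hu => by
      rw [Set.uIcc_of_le hab] at hu
      exact h.hasDerivAt_arg_bargmann hx hy (hxu u hu) (hyu u hu) hxy
        (Or.inl (by rw [bargmann_re]; exact hs u hu)))
    ((ix.sub iy).const_mul _)
  rw [intervalIntegral.integral_const_mul, intervalIntegral.integral_sub ix iy] at key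
  have : bargmann γ x y a = bargmann γ x y b := by simp only [bargmann, hclosed]
  rw [this, sub_self] at key
  simp only [windingIntegral]
  linarith

theorem IsRegularCurve.dot3_lt_one (h : IsRegularCurve γ) {x : R3}
    (hx : x ∈ sphere2 \ γ '' Set.Icc a b) {u : ℝ} (hu : u ∈ Set.Icc a b) : dot3 x (γ u) < 1 :=
  _root_.dot3_lt_one hx.1 (h.sphere u) fun e => hx.2 ⟨u, hu, e.symm⟩

theorem IsRegularCurve.windingIntegral_eventually_eq (h : IsRegularCurve γ) (hab : a ≤ b)
    (hclosed : γ a = γ b) {y : R3} (hy : y ∈ sphere2 \ γ '' Set.Icc a b) :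
    ∀ᶠ x in 𝓝[sphere2] y, windingIntegral γ a b x = windingIntegral γ a b y := by
  have hγ := h.smooth.continuous
  have hyy : dot3 y y = 1 := hy.1
  have h1 : ∀ᶠ x in 𝓝 y, ∀ u ∈ Set.Icc a b, dot3 x (γ u) < 1 ∧ 0 < bargmannRe x y (γ u) := by
    refine isCompact_Icc.eventually_forall_of_forall_eventually fun u hu => ?_
    have hlt := h.dot3_lt_one hy hu
    refine Eventually.and ?_ ?_
    · refine ContinuousAt.eventually_lt (f := fun z : R3 × ℝ => dot3 z.1 (γ z.2))
        (g := fun _ => 1) ?_ continuousAt_const hlt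
      fun_prop
    · refine ContinuousAt.eventually_lt (f := fun _ => (0 : ℝ))
        (g := fun z : R3 × ℝ => bargmannRe z.1 y (γ z.2)) continuousAt_const ?_ ?_
      · unfold bargmannRe; fun_prop
      · simp only [bargmannRe]; linarith
  have h2 : ∀ᶠ x in 𝓝 y, 0 < 1 + dot3 x y := by
    refine ContinuousAt.eventually_lt (f := fun _ => (0 : ℝ)) (g := fun x : R3 => 1 + dot3 x y)
      continuousAt_const ?_ ?_
    · fun_prop
    · show (0 : ℝ) < 1 + dot3 y y
      linarith
  filter_upwards [h1.filter_mono nhdsWithin_le_nhds, h2.filter_mono nhdsWithin_le_nhds,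
    self_mem_nhdsWithin] with x hx1 hx2 hx3
  exact h.windingIntegral_eq hab hclosed hx3 hyy (fun u hu => (hx1 u hu).1)
    (fun u hu => h.dot3_lt_one hy hu) hx2 fun u hu => (hx1 u hu).2

theorem IsRegularCurve.windingIntegral_eq_of_isPreconnected (h : IsRegularCurve γ) (hab : a ≤ b)
    (hclosed : γ a = γ b) {S : Set R3} (hS : IsPreconnected S)
    (hsub : S ⊆ sphere2 \ γ '' Set.Icc a b) {x y : R3} (hx : x ∈ S) (hy : y ∈ S) :
    windingIntegral γ a b x = windingIntegral γ a b y := by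
  refine hS.induction₂ (fun x y => windingIntegral γ a b x = windingIntegral γ a b y)
    (fun x hx => ?_) (fun _ _ _ _ _ _ h1 h2 => h1.trans h2) (fun _ _ _ _ h1 => h1.symm) hx hy
  exact ((h.windingIntegral_eventually_eq hab hclosed (hsub hx)).filter_mono
    (nhdsWithin_mono _ fun z hz => (hsub hz).1)).mono fun _ => Eq.symm

theorem IsRegularCurve.windingIntegral_eq_of_mem_closure (h : IsRegularCurve γ) (hab : a ≤ b)
    (hclosed : γ a = γ b) {S : Set R3} (hS : IsPreconnected S)
    (hsub : S ⊆ sphere2 \ γ '' Set.Icc a b) {x y : R3} (hx : x ∈ closure S)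
    (hx' : x ∈ sphere2 \ γ '' Set.Icc a b) (hy : y ∈ S) :
    windingIntegral γ a b x = windingIntegral γ a b y := by
  have h1 := (h.windingIntegral_eventually_eq hab hclosed hx').filter_mono
    (nhdsWithin_mono _ fun z hz => (hsub hz).1 : 𝓝[S] x ≤ _)
  have : (𝓝[S] x).NeBot := mem_closure_iff_nhdsWithin_neBot.1 hx
  obtain ⟨z, hz, hzS⟩ := (h1.and self_mem_nhdsWithin).exists
  rw [← hz]
  exact h.windingIntegral_eq_of_isPreconnected hab hclosed hS hsub hzS hy

end Index

section Jump

open Filter Topology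

/-- The point of the sphere obtained by pushing `γ u` in the normal direction. -/
def pushOff (γ : ℝ → R3) (u δ : ℝ) : R3 :=
  (Real.sqrt (1 + δ ^ 2))⁻¹ • (γ u + δ • unitNormal γ u)

variable {γ : ℝ → R3} {a b : ℝ}

namespace IsRegularCurve

theorem norm_pushOff (h : IsRegularCurve γ) (u δ : ℝ) :
    dot3 (γ u + δ • unitNormal γ u) (γ u + δ • unitNormal γ u) = 1 + δ ^ 2 := by
  rw [dot3_add, add_dot3, add_dot3, smul_dot3, smul_dot3, dot3_smul, dot3_smul, h.sphere,
    h.normal_unit, dot3_comm (unitNormal γ u), dot3_normal]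
  ring

theorem normalize3_eq_pushOff (h : IsRegularCurve γ) (u δ : ℝ) :
    normalize3 (γ u + (1 * δ) • unitNormal γ u) = pushOff γ u δ := by
  rw [normalize3, norm3, one_mul, h.norm_pushOff, pushOff]

theorem pushOff_unit (h : IsRegularCurve γ) (u δ : ℝ) :
    dot3 (pushOff γ u δ) (pushOff γ u δ) = 1 := by
  have h0 := sqrt_mu_pos δ
  have h1 : Real.sqrt (1 + δ ^ 2) ^ 2 = 1 + δ ^ 2 := Real.sq_sqrt (by positivity)
  rw [pushOff, dot3_smul, smul_dot3, h.norm_pushOff]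
  generalize Real.sqrt (1 + δ ^ 2) = r at *
  rw [← h1]
  field_simp

theorem continuous_pushOff (h : IsRegularCurve γ) :
    Continuous fun z : ℝ × ℝ => pushOff γ z.1 z.2 := by
  have h1 := h.smooth.continuous
  have h2 := h.contDiff_unitNormal.continuous
  unfold pushOff
  have h3 : Continuous fun z : ℝ × ℝ => Real.sqrt (1 + z.2 ^ 2) := by fun_prop
  exact (h3.inv₀ fun z => (sqrt_mu_pos z.2).ne').smul (by fun_prop)

theorem dot3_pushOff (γ : ℝ → R3) (x : R3) (u δ : ℝ) : dot3 x (pushOff γ u δ) =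
    (Real.sqrt (1 + δ ^ 2))⁻¹ * (dot3 x (γ u) + δ * dot3 x (unitNormal γ u)) := by
  rw [pushOff, dot3_smul, dot3_add, dot3_smul]

theorem pushOff_tangent (h : IsRegularCurve γ) (u δ : ℝ) :
    dot3 (pushOff γ u δ) (unitTangent γ u) = 0 := by
  rw [dot3_comm, dot3_pushOff, tangent_normal, dot3_comm, h.dot3_tangent]; ring

theorem pushOff_point (h : IsRegularCurve γ) (u δ : ℝ) :
    dot3 (pushOff γ u δ) (γ u) = (Real.sqrt (1 + δ ^ 2))⁻¹ := by
  rw [dot3_comm, dot3_pushOff, dot3_normal, h.sphere]; ring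

theorem pushOff_normal (h : IsRegularCurve γ) (u δ : ℝ) :
    dot3 (pushOff γ u δ) (unitNormal γ u) = (Real.sqrt (1 + δ ^ 2))⁻¹ * δ := by
  rw [dot3_comm, dot3_pushOff, h.normal_unit, dot3_comm, dot3_normal]; ring

theorem bargmannRe_pushOff (h : IsRegularCurve γ) (s δ : ℝ) (g : R3) :
    bargmannRe (pushOff γ s δ) (pushOff γ s (-δ)) g =
      2 / (1 + δ ^ 2) * (1 - Real.sqrt (1 + δ ^ 2) * dot3 g (γ s)) := by
  have h0 := sqrt_mu_pos δ
  have h1 : Real.sqrt (1 + δ ^ 2) ^ 2 = 1 + δ ^ 2 := Real.sq_sqrt (by positivity)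
  rw [bargmannRe, dot3_pushOff γ (pushOff γ s δ), h.pushOff_point, h.pushOff_normal, dot3_comm,
    dot3_pushOff, dot3_comm (pushOff _ _ _), dot3_pushOff, neg_sq]
  generalize Real.sqrt (1 + δ ^ 2) = r at *
  rw [← h1]
  field_simp
  linear_combination h1

theorem det3_pushOff (h : IsRegularCurve γ) (s δ : ℝ) (g : R3) :
    det3 (pushOff γ s δ) g (pushOff γ s (-δ)) =
      -(2 * δ / (1 + δ ^ 2)) * dot3 g (unitTangent γ s) := by
  have h0 := sqrt_mu_pos δ
  have h1 : Real.sqrt (1 + δ ^ 2) ^ 2 = 1 + δ ^ 2 := Real.sq_sqrt (by positivity)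
  rw [det3_frame (h.sphere s) (h.tangent_unit s) (h.dot3_tangent s), ← unitNormal_eq,
    h.pushOff_point, h.pushOff_normal, h.pushOff_point, h.pushOff_normal, h.pushOff_tangent,
    h.pushOff_tangent, neg_sq]
  generalize Real.sqrt (1 + δ ^ 2) = r at *
  rw [← h1]
  field_simp; ring

theorem ne_of_mem (hsh : IsShell γ a b) {s u : ℝ} (hs : s ∈ Set.Ioo a b) (hu : u ∈ Set.Icc a b)
    (hus : u ≠ s) : γ u ≠ γ s := by
  obtain ⟨hab, hinj, hcl, -⟩ := hsh
  rcases eq_or_lt_of_le hu.2 with rfl | h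
  · rw [← hcl]
    intro e
    exact hs.1.ne (hinj ⟨le_rfl, hab⟩ ⟨hs.1.le, hs.2⟩ e)
  · exact fun e => hus (hinj ⟨hu.1, h⟩ ⟨hs.1.le, hs.2⟩ e)

theorem eventually_tangent_sign (h : IsRegularCurve γ) (s : ℝ) :
    ∃ ε > 0, (∀ u ∈ Set.Ioo (s - ε) s, dot3 (γ u) (unitTangent γ s) < 0) ∧
      ∀ u ∈ Set.Ioo s (s + ε), 0 < dot3 (γ u) (unitTangent γ s) := by
  have h1 := (h.hasDerivAt s).dot3_const (unitTangent γ s)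
  rw [h.deriv_tangent] at h1
  have h2 := eventually_nhdsWithin_sign_eq_of_deriv_pos
    (f := fun u => dot3 (γ u) (unitTangent γ s)) (x₀ := s)
    (by rw [h1.deriv]; exact h.speed_pos s) (h.dot3_tangent s)
  obtain ⟨ε, hε, hball⟩ := Metric.eventually_nhds_iff.1 h2
  refine ⟨ε, hε, fun u hu => ?_, fun u hu => ?_⟩
  · have := hball (y := u) (by rw [Real.dist_eq, abs_lt]; constructor <;> linarith [hu.1, hu.2])
    rw [sign_neg (by linarith [hu.2] : u - s < 0)] at this
    exact sign_eq_neg_one_iff.1 this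
  · have := hball (y := u) (by rw [Real.dist_eq, abs_lt]; constructor <;> linarith [hu.1, hu.2])
    rw [sign_pos (by linarith [hu.1] : 0 < u - s)] at this
    exact sign_eq_one_iff.1 this

/-- Crossing the curve changes the winding integral. -/
theorem eventually_windingIntegral_ne (h : IsRegularCurve γ) (hsh : IsShell γ a b) {s : ℝ}
    (hs : s ∈ Set.Ioo a b) : ∀ᶠ δ in 𝓝[>] (0 : ℝ),
      windingIntegral γ a b (pushOff γ s δ) ≠ windingIntegral γ a b (pushOff γ s (-δ)) := by
  have hγ := h.smooth.continuous
  obtain ⟨ε, hε, hneg, hpos⟩ := h.eventually_tangent_sign s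
  have hfar : ∀ᶠ δ in 𝓝 (0 : ℝ), ∀ u ∈ Set.Icc a b \ Set.Ioo (s - ε) (s + ε),
      Real.sqrt (1 + δ ^ 2) * dot3 (γ u) (γ s) < 1 := by
    refine (isCompact_Icc.diff isOpen_Ioo).eventually_forall_of_forall_eventually fun u hu => ?_
    refine ContinuousAt.eventually_lt
      (f := fun z : ℝ × ℝ => Real.sqrt (1 + z.1 ^ 2) * dot3 (γ z.2) (γ s)) (g := fun _ => 1)
      (by fun_prop) continuousAt_const ?_
    have hus : u ≠ s := by
      rintro rfl; exact hu.2 ⟨by linarith, by linarith⟩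
    simpa using _root_.dot3_lt_one (h.sphere u) (h.sphere s) (ne_of_mem hsh hs hu.1 hus)
  filter_upwards [hfar.filter_mono nhdsWithin_le_nhds, self_mem_nhdsWithin] with δ hδ hδ0
  have hδ0 : 0 < δ := hδ0
  set x := pushOff γ s δ with hxdef
  set y := pushOff γ s (-δ) with hydef
  set r := Real.sqrt (1 + δ ^ 2) with hr
  have hr1 : 1 < r := by
    rw [hr, Real.lt_sqrt (by norm_num)]; nlinarith
  have hrr : r ^ 2 = 1 + δ ^ 2 := Real.sq_sqrt (by positivity)
  have hx : dot3 x x = 1 := h.pushOff_unit s δ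
  have hy : dot3 y y = 1 := h.pushOff_unit s (-δ)
  have hre : ∀ u, bargmannRe x y (γ u) = 2 / (1 + δ ^ 2) * (1 - r * dot3 (γ u) (γ s)) :=
    fun u => h.bargmannRe_pushOff s δ (γ u)
  have him : ∀ u, det3 x (γ u) y = -(2 * δ / (1 + δ ^ 2)) * dot3 (γ u) (unitTangent γ s) :=
    fun u => h.det3_pushOff s δ (γ u)
  have hxy : 0 < 1 + dot3 x y := by
    have e : dot3 x y = r⁻¹ * (r⁻¹ - δ * (r⁻¹ * δ)) := by
      rw [hydef, dot3_pushOff, h.pushOff_point, h.pushOff_normal, neg_sq, ← hr]; ring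
    have e2 : dot3 x y = (1 - δ ^ 2) / r ^ 2 := by
      rw [e]; field_simp
    rw [e2, hrr, ← neg_lt_iff_pos_add', lt_div_iff₀ (by positivity)]
    linarith
  have hcase : ∀ u ∈ Set.Icc a b, u ≠ s →
      dot3 (γ u) (unitTangent γ s) ≠ 0 ∨ r * dot3 (γ u) (γ s) < 1 := by
    intro u hu hus
    by_cases hn : u ∈ Set.Ioo (s - ε) (s + ε)
    · left
      rcases lt_or_gt_of_ne hus with h1 | h1
      · exact (hneg u ⟨hn.1, h1⟩).ne
      · exact (hpos u ⟨h1, hn.2⟩).ne'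
    · exact Or.inr (hδ u ⟨hu, hn⟩)
  have hslit : ∀ u ∈ Set.Icc a b, u ≠ s → bargmann γ x y u ∈ Complex.slitPlane := by
    intro u hu hus
    rw [Complex.mem_slitPlane_iff, bargmann_re, bargmann_im, hre, him]
    rcases hcase u hu hus with h1 | h1
    · right
      exact mul_ne_zero (neg_ne_zero.2 (by positivity)) h1
    · left
      exact mul_pos (by positivity) (by linarith)
  have hoff : ∀ δ' : ℝ, δ' ^ 2 = δ ^ 2 → ∀ u ∈ Set.Icc a b, dot3 (pushOff γ s δ') (γ u) < 1 := by
    intro δ' hδ' u hu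
    refine _root_.dot3_lt_one (h.pushOff_unit s δ') (h.sphere u) fun e => ?_
    have e1 : dot3 (γ u) (γ s) = r⁻¹ := by rw [← e, h.pushOff_point, hδ']
    have e2 : dot3 (γ u) (unitTangent γ s) = 0 := by rw [← e, h.pushOff_tangent]
    by_cases hus : u = s
    · rw [hus, h.sphere] at e1
      exact hr1.ne' (inv_eq_one.1 e1.symm)
    · rcases hcase u hu hus with h1 | h1
      · exact h1 e2
      · rw [e1, mul_inv_cancel₀ (by positivity)] at h1
        exact lt_irrefl _ h1
  have hxu := hoff δ rfl
  have hyu := hoff (-δ) (neg_sq δ)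
  have hsub1 : Set.Icc a s ⊆ Set.Icc a b := Set.Icc_subset_Icc_right hs.2.le
  have hsub2 : Set.Icc s b ⊆ Set.Icc a b := Set.Icc_subset_Icc_left hs.1.le
  have cx := h.continuousOn_windingDensity hxu
  have cy := h.continuousOn_windingDensity hyu
  have ix1 : IntervalIntegrable (windingDensity γ x) MeasureTheory.volume a s :=
    (cx.mono hsub1).intervalIntegrable_of_Icc hs.1.le
  have iy1 : IntervalIntegrable (windingDensity γ y) MeasureTheory.volume a s :=
    (cy.mono hsub1).intervalIntegrable_of_Icc hs.1.le
  have ix2 : IntervalIntegrable (windingDensity γ x) MeasureTheory.volume s b :=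
    (cx.mono hsub2).intervalIntegrable_of_Icc hs.2.le
  have iy2 : IntervalIntegrable (windingDensity γ y) MeasureTheory.volume s b :=
    (cy.mono hsub2).intervalIntegrable_of_Icc hs.2.le
  have hcont := h.continuous_bargmann x y
  have hd : ∀ u ∈ Set.Icc a b, u ≠ s → HasDerivAt (fun u => (bargmann γ x y u).arg)
      (1 / 2 * (windingDensity γ x u - windingDensity γ y u)) u := fun u hu hus =>
    h.hasDerivAt_arg_bargmann hx hy (hxu u hu) (hyu u hu) hxy (hslit u hu hus)
  have hres : (bargmann γ x y s).re < 0 := by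
    rw [bargmann_re, hre, h.sphere]
    exact mul_neg_of_pos_of_neg (by positivity) (by linarith)
  have hims : (bargmann γ x y s).im = 0 := by
    rw [bargmann_im, him, h.dot3_tangent, mul_zero]
  have tl : Tendsto (fun u => (bargmann γ x y u).arg) (𝓝[<] s) (𝓝 Real.pi) := by
    refine (Complex.tendsto_arg_nhdsWithin_im_nonneg_of_re_neg_of_im_zero hres hims).comp
      (tendsto_nhdsWithin_iff.2 ⟨hcont.continuousAt.tendsto.mono_left nhdsWithin_le_nhds, ?_⟩)
    filter_upwards [Ioo_mem_nhdsLT (by linarith : s - ε < s)] with u hu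
    show 0 ≤ (bargmann γ x y u).im
    rw [bargmann_im, him]
    exact mul_nonneg_of_nonpos_of_nonpos (neg_nonpos.2 (by positivity)) (hneg u hu).le
  have tr : Tendsto (fun u => (bargmann γ x y u).arg) (𝓝[>] s) (𝓝 (-Real.pi)) := by
    refine (Complex.tendsto_arg_nhdsWithin_im_neg_of_re_neg_of_im_zero hres hims).comp
      (tendsto_nhdsWithin_iff.2 ⟨hcont.continuousAt.tendsto.mono_left nhdsWithin_le_nhds, ?_⟩)
    filter_upwards [Ioo_mem_nhdsGT (by linarith : s < s + ε)] with u hu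
    show (bargmann γ x y u).im < 0
    rw [bargmann_im, him]
    exact mul_neg_of_neg_of_pos (neg_neg_iff_pos.2 (by positivity)) (hpos u hu)
  have ta : Tendsto (fun u => (bargmann γ x y u).arg) (𝓝[>] a) (𝓝 (bargmann γ x y a).arg) :=
    (hd a ⟨le_rfl, hsh.1.le⟩ hs.1.ne).continuousAt.tendsto.mono_left nhdsWithin_le_nhds
  have tb : Tendsto (fun u => (bargmann γ x y u).arg) (𝓝[<] b) (𝓝 (bargmann γ x y b).arg) :=
    (hd b ⟨hsh.1.le, le_rfl⟩ hs.2.ne').continuousAt.tendsto.mono_left nhdsWithin_le_nhds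
  have k1 := intervalIntegral.integral_eq_sub_of_hasDerivAt_of_tendsto hs.1
    (fun u hu => hd u (hsub1 ⟨hu.1.le, hu.2.le⟩) hu.2.ne) ((ix1.sub iy1).const_mul _) ta tl
  have k2 := intervalIntegral.integral_eq_sub_of_hasDerivAt_of_tendsto hs.2
    (fun u hu => hd u (hsub2 ⟨hu.1.le, hu.2.le⟩) hu.1.ne') ((ix2.sub iy2).const_mul _) tr tb
  rw [intervalIntegral.integral_const_mul, intervalIntegral.integral_sub ix1 iy1] at k1
  rw [intervalIntegral.integral_const_mul, intervalIntegral.integral_sub ix2 iy2] at k2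
  have hab : bargmann γ x y a = bargmann γ x y b := by simp only [bargmann, hsh.2.2.1]
  rw [hab] at k1
  have hpi := Real.pi_pos
  simp only [windingIntegral]
  rw [← intervalIntegral.integral_add_adjacent_intervals ix1 ix2,
    ← intervalIntegral.integral_add_adjacent_intervals iy1 iy2]
  intro e
  linarith

end IsRegularCurve

end Jump

section Exterior

open Filter Topology

theorem hasFDerivAt_dot3_prod {f g : ℝ → R3} {f' g' : R3} {p : ℝ × ℝ}
    (hf : HasDerivAt f f' p.1) (hg : HasDerivAt g g' p.2) :
    HasFDerivAt (fun z : ℝ × ℝ => dot3 (f z.1) (g z.2))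
      (dot3 f' (g p.2) • ContinuousLinearMap.fst ℝ ℝ ℝ +
        dot3 (f p.1) g' • ContinuousLinearMap.snd ℝ ℝ ℝ) p := by
  have hfi : ∀ i, HasFDerivAt (fun z : ℝ × ℝ => f z.1 i)
      (f' i • ContinuousLinearMap.fst ℝ ℝ ℝ) p := fun i =>
    (hasDerivAt_pi.1 hf i).comp_hasFDerivAt p hasFDerivAt_fst
  have hgi : ∀ i, HasFDerivAt (fun z : ℝ × ℝ => g z.2 i)
      (g' i • ContinuousLinearMap.snd ℝ ℝ ℝ) p := fun i =>
    (hasDerivAt_pi.1 hg i).comp_hasFDerivAt p hasFDerivAt_snd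
  have := (((hfi 0).mul (hgi 0)).add ((hfi 1).mul (hgi 1))).add ((hfi 2).mul (hgi 2))
  convert! this using 1
  ext <;> simp [dot3]
  ring

/-- If the differential of `(g₁, g₂)` is triangular and invertible, then on the zero set of `g₁`
the sign of `g₂` is determined by the second variable. -/
theorem eventually_nonneg_of_triangular {g₁ g₂ : ℝ × ℝ → ℝ} {p : ℝ × ℝ} {c m k : ℝ} (hc : 0 < c)
    (hk : k ≠ 0)
    (h₁ : HasFDerivAt g₁ ((-c) • ContinuousLinearMap.fst ℝ ℝ ℝ +
      m • ContinuousLinearMap.snd ℝ ℝ ℝ) p) (h₁₀ : g₁ p = 0)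
    (h₂ : HasFDerivAt g₂ ((0 : ℝ) • ContinuousLinearMap.fst ℝ ℝ ℝ +
      k • ContinuousLinearMap.snd ℝ ℝ ℝ) p) (h₂₀ : g₂ p = 0) :
    ∀ᶠ z in 𝓝 p, 0 ≤ (z.2 - p.2) * k → g₁ z = 0 → 0 ≤ g₂ z := by
  have hk' : 0 < |k| := abs_pos.2 hk
  set M : ℝ := (|m| + c / 2) / (c / 2) with hM
  have hM0 : 0 ≤ M := by positivity
  set η : ℝ := min (c / 2) (|k| / (M + 1)) with hη
  have hη0 : 0 < η := lt_min (by positivity) (by positivity)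
  have hη1 : η ≤ c / 2 := min_le_left _ _
  have hη2 : η * (M + 1) ≤ |k| := by
    rw [← le_div_iff₀ (by positivity)]; exact min_le_right _ _
  filter_upwards [h₁.isLittleO.def hη0, h₂.isLittleO.def hη0] with z hz1 hz2 hsign hz0
  rw [hz0, h₁₀] at hz1
  rw [h₂₀] at hz2
  set x := z.1 - p.1 with hx
  set y := z.2 - p.2 with hy
  simp only [_root_.add_apply, _root_.smul_apply,
    ContinuousLinearMap.coe_fst', ContinuousLinearMap.coe_snd', Prod.fst_sub, Prod.snd_sub,
    smul_eq_mul, ← hx, ← hy, Real.norm_eq_abs, Prod.norm_def, sub_zero, zero_mul, zero_add,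
    zero_sub] at hz1 hz2
  have hmax : max |x| |y| ≤ |x| + |y| := max_le_add_of_nonneg (abs_nonneg x) (abs_nonneg y)
  have hx1 : c * |x| ≤ |m| * |y| + η * (|x| + |y|) := by
    have e : c * |x| = |m * y - (-c * x + m * y)| := by
      rw [← abs_of_pos hc, ← abs_mul, abs_of_pos hc]; congr 1; ring
    have e2 := abs_sub (m * y) (-c * x + m * y)
    rw [abs_mul] at e2
    rw [abs_neg] at hz1
    have := mul_le_mul_of_nonneg_left hmax hη0.le
    linarith
  have hx2 : |x| ≤ M * |y| := by
    rw [hM, div_mul_eq_mul_div, le_div_iff₀ (by positivity)]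
    nlinarith [abs_nonneg x, abs_nonneg y]
  have hky : |k| * |y| = y * k := by rw [← abs_mul, mul_comm, abs_of_nonneg hsign]
  have h3 := (abs_le.1 hz2).1
  have h4 := mul_le_mul_of_nonneg_left hmax hη0.le
  have h5 : η * (|x| + |y|) ≤ |k| * |y| := by
    calc η * (|x| + |y|) ≤ η * (M * |y| + |y|) := by gcongr
      _ = η * (M + 1) * |y| := by ring
      _ ≤ |k| * |y| := by gcongr
  linarith

variable {γ : ℝ → R3} {a b : ℝ}

namespace IsRegularCurve

theorem eventually_pushOff_ne_self (h : IsRegularCurve γ) (s : ℝ) :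
    ∀ᶠ z : (ℝ × ℝ) × ℝ in 𝓝 ((s, 0), s), z.1.2 < 0 → γ z.2 ≠ pushOff γ z.1.1 z.1.2 := by
  have hγ' := h.contDiff_deriv.continuous
  have h1 : ∀ᶠ w : ℝ × ℝ in 𝓝 (s, s), 0 < dot3 (deriv γ w.2) (deriv γ w.1) := by
    refine ContinuousAt.eventually_lt (f := fun _ => (0 : ℝ))
      (g := fun w : ℝ × ℝ => dot3 (deriv γ w.2) (deriv γ w.1)) continuousAt_const ?_ ?_
    · exact ((hγ'.comp continuous_snd).dot3 (hγ'.comp continuous_fst)).continuousAt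
    · show 0 < dot3 (deriv γ s) (deriv γ s)
      rw [← norm3_mul_self]
      exact mul_pos (h.speed_pos s) (h.speed_pos s)
  obtain ⟨ε, hε, hball⟩ := Metric.eventually_nhds_iff.1 h1
  filter_upwards [Metric.ball_mem_nhds ((s, (0 : ℝ)), s) hε] with z hz hneg heq
  rw [Metric.mem_ball, Prod.dist_eq, Prod.dist_eq, max_lt_iff, max_lt_iff] at hz
  obtain ⟨⟨hz1, -⟩, hz2⟩ := hz
  simp only at hz1 hz2
  have hmono : StrictMonoOn (fun u' => dot3 (γ u') (deriv γ z.1.1)) (Metric.ball s ε) := by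
    refine strictMonoOn_of_deriv_pos (convex_ball s ε)
      (h.smooth.continuous.dot3 continuous_const).continuousOn fun u' hu' => ?_
    rw [interior_eq_iff_isOpen.2 Metric.isOpen_ball] at hu'
    rw [((h.hasDerivAt u').dot3_const _).deriv]
    refine hball (y := (z.1.1, u')) ?_
    rw [Prod.dist_eq]
    exact max_lt hz1 hu'
  have heq2 : z.2 = z.1.1 := by
    refine hmono.injOn (show z.2 ∈ _ from hz2) (show z.1.1 ∈ _ from hz1) ?_
    rw [h.dot3_deriv, heq, h.deriv_eq, dot3_smul, h.pushOff_tangent, mul_zero]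
  have e := congrArg (fun x => dot3 x (unitNormal γ z.1.1)) heq
  rw [heq2, dot3_normal, h.pushOff_normal] at e
  have : 0 < (Real.sqrt (1 + z.1.2 ^ 2))⁻¹ := inv_pos.2 (sqrt_mu_pos _)
  nlinarith

theorem eventually_pushOff_ne_corner (h : IsRegularCurve γ) {s t : ℝ} (hst : γ s = γ t)
    (hk : dot3 (deriv γ t) (unitNormal γ s) ≠ 0) :
    ∀ᶠ z : (ℝ × ℝ) × ℝ in 𝓝 ((s, 0), t), z.1.2 < 0 →
      0 ≤ (z.2 - t) * dot3 (deriv γ t) (unitNormal γ s) → γ z.2 ≠ pushOff γ z.1.1 z.1.2 := by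
  have hv := h.speed_pos s
  have h1 := hasFDerivAt_dot3_prod (p := (s, t)) (h.hasDerivAt_deriv s) (h.hasDerivAt t)
  have h2 := hasFDerivAt_dot3_prod (p := (s, t)) (h.hasDerivAt_normal s) (h.hasDerivAt t)
  simp only at h1 h2
  rw [← hst, h.second_deriv_point] at h1
  rw [← hst, smul_dot3, dot3_comm (deriv γ s), h.dot3_deriv, mul_zero, dot3_comm (unitNormal γ s)]
    at h2
  have key := eventually_nonneg_of_triangular (pow_pos hv 2) hk h1
    (by simp only; rw [← hst, dot3_comm, h.dot3_deriv]) h2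
    (by simp only; rw [← hst, dot3_comm, dot3_normal])
  have hc : Tendsto (fun z : (ℝ × ℝ) × ℝ => (z.1.1, z.2)) (𝓝 ((s, 0), t)) (𝓝 (s, t)) := by
    have : Continuous fun z : (ℝ × ℝ) × ℝ => (z.1.1, z.2) := by fun_prop
    exact this.tendsto ((s, 0), t)
  filter_upwards [hc.eventually key] with z hz hneg hsign heq
  have h3 := hz hsign (by
    rw [heq, dot3_comm, h.deriv_eq, dot3_smul, h.pushOff_tangent, mul_zero])
  rw [heq, dot3_comm, h.pushOff_normal] at h3
  have : 0 < (Real.sqrt (1 + z.1.2 ^ 2))⁻¹ := inv_pos.2 (sqrt_mu_pos _)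
  nlinarith

theorem corner_sign_left (h : IsRegularCurve γ) (hsh : IsPositiveShell γ a b) :
    dot3 (deriv γ b) (unitNormal γ a) < 0 := by
  have h1 := hsh.2
  have h2 : det3 (γ a) (deriv γ a) (deriv γ b) =
      norm3 (deriv γ a) * dot3 (deriv γ b) (unitNormal γ a) := by
    rw [unitNormal_eq, ← dot3_smul, ← cross3_smul, ← h.deriv_eq]
    simp [det3, dot3, cross3]; ring
  rw [h2] at h1
  exact (mul_neg_iff.1 h1).resolve_right (fun h3 => absurd h3.1 (h.speed_pos a).le.not_gt) |>.2

theorem corner_sign_right (h : IsRegularCurve γ) (hsh : IsPositiveShell γ a b) :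
    0 < dot3 (deriv γ a) (unitNormal γ b) := by
  have h1 := hsh.2
  have h2 : det3 (γ a) (deriv γ a) (deriv γ b) =
      norm3 (deriv γ b) * -dot3 (deriv γ a) (unitNormal γ b) := by
    rw [mul_neg, unitNormal_eq, ← dot3_smul, ← cross3_smul, ← h.deriv_eq, ← hsh.1.2.2.1]
    simp [det3, dot3, cross3]; ring
  rw [h2] at h1
  have := (mul_neg_iff.1 h1).resolve_right (fun h3 => absurd h3.1 (h.speed_pos b).le.not_gt) |>.2
  linarith

theorem eventually_pushOff_notMem (h : IsRegularCurve γ) (hsh : IsPositiveShell γ a b) {s : ℝ}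
    (hs : s ∈ Set.Icc a b) :
    ∀ᶠ z : ℝ × ℝ in 𝓝 (s, 0), z.2 < 0 → pushOff γ z.1 z.2 ∉ γ '' Set.Icc a b := by
  have hγ := h.smooth.continuous
  have hp := h.continuous_pushOff
  have key : ∀ᶠ z : ℝ × ℝ in 𝓝 (s, 0), ∀ t ∈ Set.Icc a b,
      t ∈ Set.Icc a b → z.2 < 0 → γ t ≠ pushOff γ z.1 z.2 := by
    refine isCompact_Icc.eventually_forall_of_forall_eventually fun t ht => ?_
    by_cases hst : γ s = γ t
    · by_cases hst' : s = t
      · subst hst'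
        exact (h.eventually_pushOff_ne_self s).mono fun z hz _ => hz
      · have hs' : ¬ s ∈ Set.Ioo a b := fun hs' => ne_of_mem hsh.1 hs' ht (Ne.symm hst') hst.symm
        have ht' : ¬ t ∈ Set.Ioo a b := fun ht' => ne_of_mem hsh.1 ht' hs hst' hst
        rcases eq_or_lt_of_le hs.1 with e1 | e1
        · have e2 : t = b := by
            refine le_antisymm ht.2 (not_lt.1 fun e2 => ht' ⟨lt_of_le_of_ne ht.1 ?_, e2⟩)
            rwa [e1]
          subst e1 e2
          have hk := h.corner_sign_left hsh
          refine (h.eventually_pushOff_ne_corner hst hk.ne).mono fun z hz hz1 hz2 => hz hz2 ?_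
          exact mul_nonneg_of_nonpos_of_nonpos (by linarith [hz1.2]) hk.le
        · have e2 : s = b := le_antisymm hs.2 (not_lt.1 fun e2 => hs' ⟨e1, e2⟩)
          have e3 : t = a := by
            refine le_antisymm (not_lt.1 fun e3 => ht' ⟨e3, lt_of_le_of_ne ht.2 ?_⟩) ht.1
            rw [← e2]; exact Ne.symm hst'
          subst e2 e3
          have hk := h.corner_sign_right hsh
          refine (h.eventually_pushOff_ne_corner hst hk.ne').mono fun z hz hz1 hz2 => hz hz2 ?_
          exact mul_nonneg (by linarith [hz1.1]) hk.le
    · have c1 : ContinuousAt (fun z : (ℝ × ℝ) × ℝ => γ z.2) ((s, 0), t) :=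
        (hγ.comp continuous_snd).continuousAt
      have c2 : ContinuousAt (fun z : (ℝ × ℝ) × ℝ => pushOff γ z.1.1 z.1.2) ((s, 0), t) :=
        (hp.comp continuous_fst).continuousAt
      have e0 : pushOff γ s 0 = γ s := by simp [pushOff]
      have hne : γ t ≠ pushOff γ s 0 := by rw [e0]; exact Ne.symm hst
      exact ((c1.ne_iff_eventually_ne c2).1 hne).mono fun z hz _ _ => hz
  filter_upwards [key] with z hz hneg
  rintro ⟨t, ht, e⟩
  exact hz t ht ht hneg e

/-- Near an arc of a positive shell, the points on the negative side lie outside the closure of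
the interior domain. -/
theorem exists_pushOff_notMem_closure (h : IsRegularCurve γ) (hsh : IsPositiveShell γ a b)
    {Δ : Set R3} (hΔ : IsInteriorDomain γ a b 1 Δ) {s : ℝ} (hs : s ∈ Set.Icc a b) :
    ∃ ε > 0, ∀ u ∈ Set.Ioo (s - ε) (s + ε), ∀ δ ∈ Set.Ioo (-ε) 0,
      pushOff γ u δ ∉ closure Δ := by
  obtain ⟨ε, hε, hball⟩ := Metric.eventually_nhds_iff.1 (h.eventually_pushOff_notMem hsh hs)
  have hab := hsh.1.1
  have hcl := hsh.1.2.2.1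
  set R : Set R3 := (fun z : ℝ × ℝ => pushOff γ z.1 z.2) ''
    (Set.Ioo (s - ε) (s + ε) ×ˢ Set.Ioo (-ε) 0) with hR
  have hRc : IsPreconnected R :=
    (isPreconnected_Ioo.prod isPreconnected_Ioo).image _ h.continuous_pushOff.continuousOn
  have hRs : R ⊆ sphere2 \ γ '' Set.Icc a b := by
    rintro _ ⟨⟨u, δ⟩, ⟨hu, hδ⟩, rfl⟩
    refine ⟨h.pushOff_unit u δ, hball (y := (u, δ)) ?_ hδ.2⟩
    rw [Prod.dist_eq, max_lt_iff, Real.dist_eq, Real.dist_eq, abs_lt, abs_lt]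
    simp only at hu hδ ⊢
    refine ⟨⟨?_, ?_⟩, ?_, ?_⟩ <;> linarith [hu.1, hu.2, hδ.1, hδ.2]
  obtain ⟨⟨q, hq, hΔq⟩, hΔn⟩ := hΔ
  have hΔc : IsPreconnected Δ := hΔq ▸ isPreconnected_connectedComponentIn
  have hΔs : Δ ⊆ sphere2 \ γ '' Set.Icc a b := hΔq ▸ connectedComponentIn_subset _ _
  obtain ⟨u0, hu0⟩ : (Set.Ioo (max a (s - ε)) (min b (s + ε))).Nonempty := by
    rw [Set.nonempty_Ioo, max_lt_iff, lt_min_iff, lt_min_iff]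
    refine ⟨⟨hab, ?_⟩, ?_, ?_⟩ <;> linarith [hs.1, hs.2]
  have hu1 : u0 ∈ Set.Ioo a b :=
    ⟨(le_max_left _ _).trans_lt hu0.1, hu0.2.trans_le (min_le_left _ _)⟩
  have hu2 : u0 ∈ Set.Ioo (s - ε) (s + ε) :=
    ⟨(le_max_right _ _).trans_lt hu0.1, hu0.2.trans_le (min_le_right _ _)⟩
  obtain ⟨ε', hε', hin⟩ := hΔn u0 hu1
  obtain ⟨δ0, hne, hδ1, hδ2⟩ := ((h.eventually_windingIntegral_ne hsh.1 hu1).and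
    (inter_mem (Ioo_mem_nhdsGT hε') (Ioo_mem_nhdsGT hε))).exists
  have hin0 := hin δ0 hδ1
  rw [h.normalize3_eq_pushOff] at hin0
  refine ⟨ε, hε, fun u hu δ hδ hmem => hne ?_⟩
  have m1 : pushOff γ u δ ∈ R := ⟨(u, δ), ⟨hu, hδ⟩, rfl⟩
  have m2 : pushOff γ u0 (-δ0) ∈ R :=
    ⟨(u0, -δ0), ⟨hu2, by constructor <;> simp only <;> linarith [hδ2.1, hδ2.2]⟩, rfl⟩
  rw [← h.windingIntegral_eq_of_mem_closure hab.le hcl hΔc hΔs hmem (hRs m1) hin0,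
    h.windingIntegral_eq_of_isPreconnected hab.le hcl hRc hRs m1 m2]

end IsRegularCurve

end Exterior

section Tangency

open Filter Topology

variable {γ : ℝ → R3} {a b μ : ℝ}

theorem div_sqrt_lt_one (μ : ℝ) : μ / Real.sqrt (1 + μ ^ 2) < 1 := by
  rw [div_lt_one (IsRegularCurve.sqrt_mu_pos μ)]
  exact Real.lt_sqrt_of_sq_lt (by linarith)

theorem eventually_pos_of_hasDerivAt {f : ℝ → ℝ} {f' x : ℝ} (hf : HasDerivAt f f' x)
    (hf' : 0 < f') (hx : f x = 0) : ∀ᶠ u in 𝓝[>] x, 0 < f u := by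
  have h2 := eventually_nhdsWithin_sign_eq_of_deriv_pos (by rwa [hf.deriv]) hx
  filter_upwards [h2.filter_mono nhdsWithin_le_nhds, self_mem_nhdsWithin] with u hu hxu
  rw [sign_pos (sub_pos.2 hxu)] at hu
  exact sign_eq_one_iff.1 hu

namespace IsRegularCurve

/-- A unit vector at the correct height over a point and orthogonal to the tangent is one of the
two centers of the tangent `μ`-circles. -/
theorem center_eq_or (h : IsRegularCurve γ) {s : ℝ} {o : R3} (ho : dot3 o o = 1)
    (hs : dot3 (γ s) o = μ / Real.sqrt (1 + μ ^ 2)) (hT : dot3 (deriv γ s) o = 0) :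
    o = tangentCenter μ γ s ∨ dot3 (unitNormal γ s) o = -(Real.sqrt (1 + μ ^ 2))⁻¹ := by
  have hr := sqrt_mu_pos μ
  have hr2 : Real.sqrt (1 + μ ^ 2) ^ 2 = 1 + μ ^ 2 := Real.sq_sqrt (by positivity)
  have hT' : dot3 (unitTangent γ s) o = 0 := by rw [unitTangent, smul_dot3, hT, mul_zero]
  have h1 := h.frame s o o
  rw [ho, dot3_comm o, dot3_comm o, dot3_comm o, hs, hT'] at h1
  have h2 : dot3 (unitNormal γ s) o ^ 2 = (Real.sqrt (1 + μ ^ 2))⁻¹ ^ 2 := by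
    generalize Real.sqrt (1 + μ ^ 2) = r at *
    have : (r⁻¹) ^ 2 = 1 - (μ / r) * (μ / r) := by
      field_simp; linarith
    rw [this]; linarith
  rcases sq_eq_sq_iff_eq_or_eq_neg.1 h2 with h3 | h3
  · left
    refine h.ext_frame s ?_ ?_ ?_
    · rw [dot3_comm, hs, dot3_comm, h.dot3_center]
    · rw [dot3_comm, hT', dot3_comm, h.tangent_center]
    · rw [dot3_comm, h3, dot3_comm, h.normal_center]
  · exact Or.inr h3

theorem eventually_le_of_ne_center (h : IsRegularCurve γ) (hsh : IsPositiveShell γ a b)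
    {Δ : Set R3} (hΔ : IsInteriorDomain γ a b 1 Δ) {s : ℝ} (hs : s ∈ Set.Icc a b) {o : R3}
    (ho : dot3 o o = 1) (hso : dot3 (γ s) o = μ / Real.sqrt (1 + μ ^ 2))
    (hC : muCircle μ o ⊆ closure Δ) (hne : o ≠ tangentCenter μ γ s) :
    ∀ᶠ u in 𝓝 s, μ / Real.sqrt (1 + μ ^ 2) ≤ dot3 (γ u) o := by
  set c := μ / Real.sqrt (1 + μ ^ 2) with hc
  obtain ⟨m, hm⟩ : ∃ m : ℝ, 0 < -m * dot3 (deriv γ s) o - dot3 (unitNormal γ s) o := by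
    by_cases hT : dot3 (deriv γ s) o = 0
    · refine ⟨0, ?_⟩
      rw [(h.center_eq_or ho hso hT).resolve_left hne]
      have := inv_pos.2 (sqrt_mu_pos μ)
      linarith
    · refine ⟨-(1 + dot3 (unitNormal γ s) o) / dot3 (deriv γ s) o, ?_⟩
      rw [neg_div, neg_neg, div_mul_cancel₀ _ hT]
      linarith
  obtain ⟨ε, hε, hext⟩ := h.exists_pushOff_notMem_closure hsh hΔ hs
  set Ψ : ℝ → ℝ → ℝ := fun u δ => dot3 (γ (u - m * δ)) o - δ * dot3 (unitNormal γ (u - m * δ)) o -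
    c * Real.sqrt (1 + δ ^ 2) with hΨ
  have hγ := h.smooth.continuous
  have hn := h.contDiff_unitNormal.continuous
  have hΨc : Continuous fun z : ℝ × ℝ => Ψ z.1 z.2 := by
    simp only [hΨ]; fun_prop
  have hΨ0 : ∀ u, Ψ u 0 = dot3 (γ u) o - c := fun u => by simp [hΨ]
  have hder : HasDerivAt (Ψ s) (-m * dot3 (deriv γ s) o - dot3 (unitNormal γ s) o) 0 := by
    have hl : HasDerivAt (fun δ : ℝ => s - m * δ) (-m) 0 := by
      simpa using ((hasDerivAt_id (0 : ℝ)).const_mul m).const_sub s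
    have e0 : s - m * 0 = s := by ring
    have h1 : HasDerivAt (fun δ : ℝ => dot3 (γ (s - m * δ)) o) (dot3 (deriv γ s) o * -m) 0 := by
      have := (h.hasDerivAt s).dot3_const o
      rw [← e0] at this
      have h2 := this.comp (0 : ℝ) hl
      rw [e0] at h2
      exact h2
    have h2 : HasDerivAt (fun δ : ℝ => dot3 (unitNormal γ (s - m * δ)) o)
        (dot3 (-kappa γ s • deriv γ s) o * -m) 0 := by
      have := (h.hasDerivAt_normal s).dot3_const o
      rw [← e0] at this
      have h2 := this.comp (0 : ℝ) hl
      rw [e0] at h2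
      exact h2
    have h3 : HasDerivAt (fun δ : ℝ => Real.sqrt (1 + δ ^ 2)) 0 0 := by
      have : HasDerivAt (fun δ : ℝ => 1 + δ ^ 2) 0 0 := by
        simpa using ((hasDerivAt_id (0 : ℝ)).pow 2).const_add 1
      simpa using this.sqrt (by norm_num)
    have := (h1.sub ((hasDerivAt_id (0 : ℝ)).mul h2)).sub (h3.const_mul c)
    convert! this using 1
    simp only [id, e0]
    ring
  obtain ⟨δ0, hδpos, hδ0, hδε, hδm⟩ : ∃ δ0, 0 < Ψ s δ0 ∧ 0 < δ0 ∧ δ0 < ε ∧ |m| * δ0 < ε / 2 := by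
    have h1 := eventually_pos_of_hasDerivAt hder hm (by rw [hΨ0, hso, sub_self])
    have h2 : ∀ᶠ δ in 𝓝[>] (0 : ℝ), |m| * δ < ε / 2 := by
      refine (ContinuousAt.eventually_lt (f := fun δ : ℝ => |m| * δ) (g := fun _ => ε / 2)
        (by fun_prop) continuousAt_const ?_).filter_mono nhdsWithin_le_nhds
      simp only [mul_zero]; linarith
    obtain ⟨δ, ⟨hh1, hh2⟩, hh3⟩ := ((h1.and h2).and (Ioo_mem_nhdsGT hε)).exists
    exact ⟨δ, hh1, hh3.1, hh3.2, hh2⟩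
  have hnear : ∀ᶠ u in 𝓝 s, 0 < Ψ u δ0 := by
    refine ContinuousAt.eventually_lt (f := fun _ => (0 : ℝ)) (g := fun u => Ψ u δ0)
      continuousAt_const ?_ hδpos
    exact (hΨc.comp (continuous_id.prodMk continuous_const)).continuousAt
  filter_upwards [hnear, Ioo_mem_nhds (by linarith : s - ε / 2 < s) (by linarith : s < s + ε / 2)]
    with u hu hus
  by_contra hlt
  rw [not_le] at hlt
  have hcont : ContinuousOn (Ψ u) (Set.Icc 0 δ0) :=
    (hΨc.comp (continuous_const.prodMk continuous_id)).continuousOn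
  obtain ⟨δ, hδ, hδz⟩ := intermediate_value_Ioo hδ0.le hcont
    (show (0 : ℝ) ∈ Set.Ioo (Ψ u 0) (Ψ u δ0) from ⟨by rw [hΨ0]; linarith, hu⟩)
  have hmδ : |m * δ| < ε / 2 := by
    rw [abs_mul, abs_of_pos hδ.1]
    exact (mul_le_mul_of_nonneg_left hδ.2.le (abs_nonneg m)).trans_lt hδm
  rw [abs_lt] at hmδ
  refine hext (u - m * δ) ⟨by linarith [hus.1, hmδ.2], by linarith [hus.2, hmδ.1]⟩ (-δ)
    ⟨by linarith [hδ.2], by linarith [hδ.1]⟩ (hC ⟨h.pushOff_unit _ _, ?_⟩)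
  rw [dot3_comm, dot3_pushOff, neg_sq, dot3_comm o, dot3_comm o, inv_mul_eq_div,
    div_eq_iff (sqrt_mu_pos δ).ne', ← hc]
  simp only [hΨ] at hδz
  linarith

theorem deriv_center_eq_zero (h : IsRegularCurve γ) (hsh : IsPositiveShell γ a b)
    {Δ : Set R3} (hΔ : IsInteriorDomain γ a b 1 Δ) {s : ℝ} (hs : s ∈ Set.Icc a b) {o : R3}
    (ho : dot3 o o = 1) (hso : dot3 (γ s) o = μ / Real.sqrt (1 + μ ^ 2))
    (hC : muCircle μ o ⊆ closure Δ) : dot3 (deriv γ s) o = 0 := by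
  by_cases hne : o = tangentCenter μ γ s
  · rw [hne, h.deriv_eq, smul_dot3, h.tangent_center, mul_zero]
  · have h1 : IsLocalMin (fun u => dot3 (γ u) o) s := by
      filter_upwards [h.eventually_le_of_ne_center hsh hΔ hs ho hso hC hne] with u hu
      rwa [hso]
    exact h1.hasDerivAt_eq_zero ((h.hasDerivAt s).dot3_const o)

theorem mem_Ioo_of_dot3_eq (h : IsRegularCurve γ) (hμ : 0 < μ) (hsh : IsPositiveShell γ a b)
    {Δ : Set R3} (hΔ : IsInteriorDomain γ a b 1 Δ) {s : ℝ} (hs : s ∈ Set.Icc a b) {o : R3}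
    (ho : dot3 o o = 1) (hso : dot3 (γ s) o = μ / Real.sqrt (1 + μ ^ 2))
    (hC : muCircle μ o ⊆ closure Δ) : s ∈ Set.Ioo a b := by
  by_contra hn
  have hcl := hsh.1.2.2.1
  have hab := hsh.1.1
  have hsa : γ s = γ a := by
    rcases eq_or_lt_of_le hs.1 with e | e
    · rw [e]
    · rw [hcl, le_antisymm hs.2 (not_lt.1 fun e2 => hn ⟨e, e2⟩)]
  rw [hsa] at hso
  have ha := h.deriv_center_eq_zero hsh hΔ (Set.left_mem_Icc.2 hab.le) ho hso hC
  have hb := h.deriv_center_eq_zero hsh hΔ (Set.right_mem_Icc.2 hab.le) ho (hcl ▸ hso) hC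
  have hT : dot3 o (unitTangent γ a) = 0 := by
    rw [dot3_comm, unitTangent, smul_dot3, ha, mul_zero]
  have hk := (h.corner_sign_left hsh).ne
  have h1 := h.frame a (deriv γ b) o
  rw [hb, hT, hcl, dot3_comm (deriv γ b) (γ b), h.dot3_deriv, zero_mul, mul_zero, zero_add,
    zero_add] at h1
  have h2 := (mul_eq_zero.1 h1.symm).resolve_left hk
  have h3 := h.frame a o o
  rw [ho, hT, h2, dot3_comm, hso] at h3
  have h4 := div_sqrt_lt_one μ
  have h5 : 0 < μ / Real.sqrt (1 + μ ^ 2) := div_pos hμ (sqrt_mu_pos μ)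
  nlinarith

theorem eventually_lt_diagonal (h : IsRegularCurve γ) (hκ : ∀ s, kappa γ s < μ) (s : ℝ) :
    ∀ᶠ z : ℝ × ℝ in 𝓝 (s, s), z.1 ≠ z.2 →
      dot3 (γ z.2) (tangentCenter μ γ z.1) < μ / Real.sqrt (1 + μ ^ 2) := by
  have hγ := h.smooth.continuous
  have ho := h.continuous_center μ
  have hγ'' : Continuous (deriv (deriv γ)) := h.contDiff_deriv.continuous_deriv (by simp)
  have h1 : ∀ᶠ z : ℝ × ℝ in 𝓝 (s, s),
      dot3 (deriv (deriv γ) z.2) (tangentCenter μ γ z.1) < 0 := by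
    refine ContinuousAt.eventually_lt
      (f := fun z : ℝ × ℝ => dot3 (deriv (deriv γ) z.2) (tangentCenter μ γ z.1))
      (g := fun _ => (0 : ℝ))
      ((hγ''.comp continuous_snd).dot3 (ho.comp continuous_fst)).continuousAt
      continuousAt_const ?_
    show dot3 (deriv (deriv γ) s) (tangentCenter μ γ s) < 0
    rw [tangentCenter, dot3_smul, dot3_add, dot3_smul, h.second_deriv_point, h.second_deriv_normal]
    have := inv_pos.2 (sqrt_mu_pos μ)
    have hv := pow_pos (h.speed_pos s) 2
    have := mul_pos (sub_pos.2 (hκ s)) hv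
    refine mul_neg_of_pos_of_neg (by assumption) (by linarith)
  obtain ⟨ε, hε, hball⟩ := Metric.eventually_nhds_iff.1 h1
  filter_upwards [Metric.ball_mem_nhds (s, s) hε] with z hz hne
  obtain ⟨t, u⟩ := z
  rw [Metric.mem_ball, Prod.dist_eq, max_lt_iff] at hz
  obtain ⟨ht, hu⟩ := hz
  simp only at ht hu hne ⊢
  set o := tangentCenter μ γ t with hodef
  have hanti : StrictAntiOn (fun u => dot3 (deriv γ u) o) (Metric.ball s ε) := by
    refine strictAntiOn_of_deriv_neg (convex_ball s ε)
      (h.contDiff_deriv.continuous.dot3 continuous_const).continuousOn fun w hw => ?_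
    rw [interior_eq_iff_isOpen.2 Metric.isOpen_ball] at hw
    rw [((h.hasDerivAt_deriv w).dot3_const _).deriv]
    refine hball (y := (t, w)) ?_
    rw [Prod.dist_eq]
    exact max_lt ht hw
  have h0 : dot3 (deriv γ t) o = 0 := by rw [h.deriv_eq, smul_dot3, h.tangent_center, mul_zero]
  have hcont : Continuous fun u => dot3 (γ u) o := hγ.dot3 continuous_const
  have hord : ∀ {x y : ℝ}, x ∈ Metric.ball s ε → y ∈ Metric.ball s ε → Set.Icc x y ⊆
      Metric.ball s ε := fun hx hy => (convex_ball s ε).ordConnected.out hx hy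
  rw [← h.dot3_center μ t, ← hodef]
  rcases lt_or_gt_of_ne hne with hlt | hlt
  · refine strictAntiOn_of_deriv_neg (convex_Icc t u) hcont.continuousOn (fun w hw => ?_)
      (Set.left_mem_Icc.2 hlt.le) (Set.right_mem_Icc.2 hlt.le) hlt
    rw [interior_Icc] at hw
    rw [((h.hasDerivAt w).dot3_const _).deriv, ← h0]
    exact hanti ht (hord ht hu ⟨hw.1.le, hw.2.le⟩) hw.1
  · refine strictMonoOn_of_deriv_pos (convex_Icc u t) hcont.continuousOn (fun w hw => ?_)
      (Set.left_mem_Icc.2 hlt.le) (Set.right_mem_Icc.2 hlt.le) hlt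
    rw [interior_Icc] at hw
    rw [((h.hasDerivAt w).dot3_const _).deriv, ← h0]
    exact hanti (hord hu ht ⟨hw.1.le, hw.2.le⟩) ht hw.2

/-- A tangent circle contained in the closure of the interior domain has the whole shell on its
outer side, and it is the tangent circle at each of its common points with the shell. -/
theorem dot3_le_and_center_eq (h : IsRegularCurve γ) (hμ : 0 < μ) (hκ : ∀ s, kappa γ s < μ)
    (hsh : IsPositiveShell γ a b) {Δ : Set R3} (hΔ : IsInteriorDomain γ a b 1 Δ) {t : ℝ}
    (ht : t ∈ Set.Icc a b) (hC : muCircle μ (tangentCenter μ γ t) ⊆ closure Δ) {s : ℝ}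
    (hs : s ∈ Set.Icc a b) :
    dot3 (γ s) (tangentCenter μ γ t) ≤ μ / Real.sqrt (1 + μ ^ 2) ∧
      (dot3 (γ s) (tangentCenter μ γ t) = μ / Real.sqrt (1 + μ ^ 2) →
        s ∈ Set.Ioo a b ∧ tangentCenter μ γ s = tangentCenter μ γ t) := by
  set c := μ / Real.sqrt (1 + μ ^ 2) with hc
  set o := tangentCenter μ γ t with hodef
  have ho : dot3 o o = 1 := h.center_unit μ t
  have hcont : Continuous fun u => dot3 (γ u) o := h.smooth.continuous.dot3 continuous_const
  set U : Set ℝ := {s | ∀ᶠ u in 𝓝 s, c ≤ dot3 (γ u) o} with hU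
  set V : Set ℝ := {s | ∀ᶠ u in 𝓝[≠] s, dot3 (γ u) o < c} with hV
  have hUo : IsOpen U := isOpen_iff_mem_nhds.2 fun x hx => eventually_eventually_nhds.2 hx
  have hVo : IsOpen V := by
    refine isOpen_iff_mem_nhds.2 fun x hx => ?_
    obtain ⟨O, hO, hxO, hsub⟩ := mem_nhdsWithin.1 hx
    filter_upwards [hO.mem_nhds hxO] with y hy
    by_cases hyx : y = x
    · rw [hyx]; exact hx
    · exact mem_nhdsWithin_of_mem_nhds
        (mem_of_superset ((hO.inter isOpen_compl_singleton).mem_nhds ⟨hy, hyx⟩) hsub)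
  have hdisj : Disjoint U V := by
    refine Set.disjoint_left.2 fun x hxU hxV => ?_
    obtain ⟨u, hu1, hu2⟩ := ((hxU.filter_mono nhdsWithin_le_nhds).and hxV).exists
    exact absurd hu2 (not_lt.2 hu1)
  have hVc : ∀ x, tangentCenter μ γ x = o → x ∈ V := by
    intro x hx
    have h1 := h.eventually_lt_diagonal hκ x
    have h2 : Tendsto (fun u : ℝ => (x, u)) (𝓝[≠] x) (𝓝 (x, x)) :=
      ((continuous_const.prodMk continuous_id).tendsto x).mono_left nhdsWithin_le_nhds
    filter_upwards [h2.eventually h1, self_mem_nhdsWithin] with u hu hux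
    rw [← hx]
    exact hu (Ne.symm hux)
  have hcase : ∀ x ∈ Set.Icc a b, dot3 (γ x) o = c → x ∈ U ∨ tangentCenter μ γ x = o := by
    intro x hx hxo
    by_cases hne : o = tangentCenter μ γ x
    · exact Or.inr hne.symm
    · exact Or.inl (h.eventually_le_of_ne_center hsh hΔ hx ho hxo hC hne)
  have hcover : Set.Icc a b ⊆ U ∪ V := by
    intro x hx
    rcases lt_trichotomy (dot3 (γ x) o) c with h1 | h1 | h1
    · exact Or.inr ((hcont.continuousAt.eventually_lt continuousAt_const h1).filter_mono
        nhdsWithin_le_nhds)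
    · exact (hcase x hx h1).imp id (hVc x)
    · exact Or.inl ((continuousAt_const.eventually_lt hcont.continuousAt h1).mono fun _ => le_of_lt)
  have hall := isPreconnected_Icc.subset_right_of_subset_union hUo hVo hdisj hcover
    ⟨t, ht, hVc t rfl⟩
  have hsV : ∀ᶠ u in 𝓝[≠] s, dot3 (γ u) o < c := hall hs
  refine ⟨?_, fun hso => ⟨h.mem_Ioo_of_dot3_eq hμ hsh hΔ hs ho hso hC, ?_⟩⟩
  · exact le_of_tendsto (hcont.continuousAt.tendsto.mono_left nhdsWithin_le_nhds)
      (hsV.mono fun _ => le_of_lt)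
  · exact (hcase s hs hso).resolve_left fun hU' => Set.disjoint_left.1 hdisj hU' (hall hs)

end IsRegularCurve

end Tangency

section Disk

open Filter Topology

theorem dot3_normalize3 (v o : R3) : dot3 (normalize3 v) o = dot3 v o / norm3 v := by
  rw [normalize3, smul_dot3, inv_mul_eq_div]

theorem normalize3_unit {v : R3} (hv : v ≠ 0) : dot3 (normalize3 v) (normalize3 v) = 1 := by
  have := (norm3_pos hv).ne'
  rw [normalize3, smul_dot3, dot3_smul, ← norm3_mul_self]
  field_simp

theorem continuous_norm3 : Continuous norm3 := by
  unfold norm3; fun_prop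

theorem ne_zero_of_dot3_pos {v o : R3} (h : 0 < dot3 v o) : v ≠ 0 := by
  rintro rfl
  simp [dot3] at h

theorem convex_ball3_inter_halfSpace (c : ℝ) (o : R3) :
    Convex ℝ {v : R3 | dot3 v v ≤ 1 ∧ c < dot3 v o} := by
  rintro x ⟨hx1, hx2⟩ y ⟨hy1, hy2⟩ p q hp hq hpq
  constructor
  · have h1 := dot3_self_nonneg (x - y)
    rw [dot3_sub, sub_dot3, sub_dot3, dot3_comm y x] at h1
    rw [dot3_add, add_dot3, add_dot3, smul_dot3, smul_dot3, smul_dot3, smul_dot3, dot3_smul,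
      dot3_smul, dot3_smul, dot3_smul, dot3_comm y x]
    have h2 := mul_nonneg hp hq
    have hq' : q = 1 - p := by linarith
    subst hq'
    nlinarith
  · show c < dot3 (p • x + q • y) o
    rw [add_dot3, smul_dot3, smul_dot3]
    rcases eq_or_lt_of_le hp with rfl | hp
    · have : q = 1 := by linarith
      subst this; linarith
    · have hq' : q = 1 - p := by linarith
      subst hq'
      nlinarith

variable {μ : ℝ}

theorem isPreconnected_muDisk (hμ : 0 < μ) (o : R3) : IsPreconnected (muDisk μ o) := by
  set c := μ / Real.sqrt (1 + μ ^ 2) with hc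
  have hc0 : 0 < c := div_pos hμ (IsRegularCurve.sqrt_mu_pos μ)
  set W : Set R3 := {v : R3 | dot3 v v ≤ 1 ∧ c < dot3 v o} with hW
  have hne : ∀ v ∈ W, v ≠ 0 := fun v hv => ne_zero_of_dot3_pos (hc0.trans hv.2)
  have himg : muDisk μ o = normalize3 '' W := by
    ext x
    constructor
    · rintro ⟨h1, h2⟩
      exact ⟨x, ⟨h1.le, h2⟩, by simp [normalize3, norm3, h1]⟩
    · rintro ⟨v, hv, rfl⟩
      refine ⟨normalize3_unit (hne v hv), ?_⟩
      have h1 := norm3_pos (hne v hv)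
      have h2 : norm3 v ≤ 1 := Real.sqrt_le_one.2 hv.1
      rw [dot3_normalize3, ← hc, lt_div_iff₀ h1]
      have := hv.2
      nlinarith
  rw [himg]
  refine (convex_ball3_inter_halfSpace c o).isPreconnected.image _ ?_
  exact (continuous_norm3.continuousOn.inv₀ fun v hv => (norm3_pos (hne v hv)).ne').smul
    continuousOn_id

theorem muCircle_subset_closure_muDisk (hμ : 0 < μ) {o : R3} (ho : dot3 o o = 1) :
    muCircle μ o ⊆ closure (muDisk μ o) := by
  rintro x ⟨hx, hxo⟩
  have hc0 : 0 < μ / Real.sqrt (1 + μ ^ 2) := div_pos hμ (IsRegularCurve.sqrt_mu_pos μ)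
  have hc1 := div_sqrt_lt_one μ
  have e0 : x + (0 : ℝ) • o = x := by simp
  have hx0 : x ≠ 0 := ne_zero_of_dot3_pos (hxo ▸ hc0)
  have hcont : ContinuousAt (fun ε : ℝ => normalize3 (x + ε • o)) 0 := by
    have h1 : ContinuousAt (fun ε : ℝ => norm3 (x + ε • o)) 0 :=
      (continuous_norm3.comp (by fun_prop)).continuousAt
    refine (h1.inv₀ ?_).smul (by fun_prop)
    rw [e0]
    exact (norm3_pos hx0).ne'
  have hlim : Tendsto (fun ε : ℝ => normalize3 (x + ε • o)) (𝓝[>] 0) (𝓝 x) := by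
    have h1 := hcont.tendsto.mono_left (nhdsWithin_le_nhds (s := Set.Ioi 0))
    rw [e0] at h1
    convert h1 using 2
    simp [normalize3, norm3, hx]
  refine mem_closure_of_tendsto hlim ?_
  filter_upwards [self_mem_nhdsWithin] with ε hε
  have hε : 0 < ε := hε
  have h1 : dot3 (x + ε • o) o = μ / Real.sqrt (1 + μ ^ 2) + ε := by
    rw [add_dot3, smul_dot3, hxo, ho, mul_one]
  have hne : x + ε • o ≠ 0 := ne_zero_of_dot3_pos (o := o) (by rw [h1]; linarith)
  refine ⟨normalize3_unit hne, ?_⟩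
  rw [dot3_normalize3, lt_div_iff₀ (norm3_pos hne), h1]
  have h2 : norm3 (x + ε • o) * norm3 (x + ε • o) =
      1 + 2 * ε * (μ / Real.sqrt (1 + μ ^ 2)) + ε ^ 2 := by
    rw [norm3_mul_self, add_dot3, dot3_add, dot3_add, smul_dot3, smul_dot3, dot3_smul, dot3_smul,
      hx, ho, dot3_comm o x, hxo]
    ring
  generalize μ / Real.sqrt (1 + μ ^ 2) = c at *
  refine lt_of_mul_self_lt_mul_self₀ (by positivity) ?_
  have h3 : 0 < (1 - c ^ 2) * (2 * ε * c + ε ^ 2) :=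
    mul_pos (by nlinarith) (by positivity)
  nlinarith

end Disk

section Minimality

open Filter Topology

namespace IsRegularCurve

variable {γ : ℝ → R3} {a b μ : ℝ}

theorem exists_pushOff_mem_muDisk (h : IsRegularCurve γ) (t : ℝ) :
    ∀ᶠ δ in 𝓝[>] (0 : ℝ), pushOff γ t δ ∈ muDisk μ (tangentCenter μ γ t) := by
  have hk := inv_pos.2 (sqrt_mu_pos μ)
  have hc1 := div_sqrt_lt_one μ
  filter_upwards [Ioo_mem_nhdsGT hk] with δ hδ
  refine ⟨h.pushOff_unit t δ, ?_⟩
  have hr := sqrt_mu_pos δ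
  rw [dot3_comm, dot3_pushOff, dot3_comm _ (γ t), dot3_comm _ (unitNormal γ t), h.dot3_center,
    h.normal_center, inv_mul_eq_div, lt_div_iff₀ hr]
  have h1 : Real.sqrt (1 + δ ^ 2) ≤ 1 + δ ^ 2 / 2 := by
    rw [Real.sqrt_le_left (by positivity)]
    nlinarith [sq_nonneg (δ ^ 2)]
  have h2 : 1 ≤ Real.sqrt (1 + δ ^ 2) := Real.one_le_sqrt.2 (by nlinarith [sq_nonneg δ])
  generalize μ / Real.sqrt (1 + μ ^ 2) = c at *
  generalize (Real.sqrt (1 + μ ^ 2))⁻¹ = k at *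
  nlinarith [hδ.1, hδ.2, mul_pos hδ.1 (sub_pos.2 hδ.2)]

/-- If the curve stays outside the open tangent disk, the tangent circle lies in the closure of
the interior domain. -/
theorem muCircle_subset_closure (h : IsRegularCurve γ) (hμ : 0 < μ) {Δ : Set R3}
    (hΔ : IsInteriorDomain γ a b 1 Δ) {t : ℝ} (ht : t ∈ Set.Ioo a b)
    (hout : ∀ s ∈ Set.Icc a b,
      dot3 (γ s) (tangentCenter μ γ t) ≤ μ / Real.sqrt (1 + μ ^ 2)) :
    muCircle μ (tangentCenter μ γ t) ⊆ closure Δ := by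
  obtain ⟨⟨q, hq, hΔq⟩, hΔn⟩ := hΔ
  obtain ⟨ε', hε', hin⟩ := hΔn t ht
  obtain ⟨δ, hδ1, hδ2⟩ := ((h.exists_pushOff_mem_muDisk (μ := μ) t).and
    (Ioo_mem_nhdsGT hε')).exists
  have hmem := hin δ hδ2
  rw [h.normalize3_eq_pushOff, hΔq] at hmem
  have hsub : muDisk μ (tangentCenter μ γ t) ⊆ sphere2 \ γ '' Set.Icc a b := by
    rintro x ⟨hx1, hx2⟩
    refine ⟨hx1, ?_⟩
    rintro ⟨s, hs, rfl⟩
    exact absurd hx2 (not_lt.2 (hout s hs))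
  have h1 := (isPreconnected_muDisk hμ (tangentCenter μ γ t)).subset_connectedComponentIn hδ1 hsub
  rw [← connectedComponentIn_eq hmem, ← hΔq] at h1
  exact (muCircle_subset_closure_muDisk hμ (h.center_unit μ t)).trans (closure_mono h1)

/-- At the first parameter whose tangent circle lies in the closure of the interior domain, the
circle touches the shell again, at a later parameter and on the back half of the circle. -/
theorem exists_contact_nonpos (h : IsRegularCurve γ) (hμ : 0 < μ) (hκ : ∀ s, kappa γ s < μ)
    (hsh : IsPositiveShell γ a b) {Δ : Set R3} (hΔ : IsInteriorDomain γ a b 1 Δ) {t₁ : ℝ}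
    (ht₁ : t₁ ∈ Set.Ioo a b) (hC : muCircle μ (tangentCenter μ γ t₁) ⊆ closure Δ)
    (hmin : ∀ t ∈ Set.Ioo a t₁, ¬muCircle μ (tangentCenter μ γ t) ⊆ closure Δ) :
    ∃ t ∈ Set.Icc a b, t₁ < t ∧
      dot3 (γ t) (tangentCenter μ γ t₁) = μ / Real.sqrt (1 + μ ^ 2) ∧
      dot3 (γ t) (deriv γ t₁) ≤ 0 := by
  by_contra! hcon
  have hE := fun s hs => h.dot3_le_and_center_eq hμ hκ hsh hΔ (Set.Ioo_subset_Icc_self ht₁) hC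
    (s := s) hs
  have hγ := h.smooth.continuous
  have hγ' := h.contDiff_deriv.continuous
  have ho := h.continuous_center μ
  have key : ∀ᶠ t in 𝓝 t₁, ∀ s ∈ Set.Icc a b, s ∈ Set.Icc a b → t < t₁ → t ≠ s →
      dot3 (γ s) (tangentCenter μ γ t) < μ / Real.sqrt (1 + μ ^ 2) := by
    refine isCompact_Icc.eventually_forall_of_forall_eventually fun y hy => ?_
    rcases (hE y hy).1.lt_or_eq with hlt | heq
    · refine (ContinuousAt.eventually_lt
        (f := fun z : ℝ × ℝ => dot3 (γ z.2) (tangentCenter μ γ z.1))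
        ((hγ.comp continuous_snd).dot3 (ho.comp continuous_fst)).continuousAt
        continuousAt_const hlt).mono fun z hz _ _ _ => hz
    · obtain ⟨hy', hcy⟩ := (hE y hy).2 heq
      rcases lt_trichotomy y t₁ with h1 | h1 | h1
      · exact absurd (hcy ▸ hC) (hmin y ⟨hy'.1, h1⟩)
      · rw [h1]
        exact (h.eventually_lt_diagonal hκ t₁).mono fun z hz _ _ => hz
      · have hpos := hcon y hy h1 heq
        have hev : ∀ᶠ z : ℝ × ℝ in 𝓝 (t₁, y), 0 < dot3 (γ z.2) (deriv γ z.1) :=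
          ContinuousAt.eventually_lt (f := fun _ => (0 : ℝ)) continuousAt_const
            ((hγ.comp continuous_snd).dot3 (hγ'.comp continuous_fst)).continuousAt hpos
        obtain ⟨ε, hε, hball⟩ := Metric.eventually_nhds_iff.1 hev
        filter_upwards [Metric.ball_mem_nhds (t₁, y) hε] with z hz hz2 hzt _
        rw [Metric.mem_ball, Prod.dist_eq, max_lt_iff] at hz
        have hmono : StrictMonoOn (fun t => dot3 (γ z.2) (tangentCenter μ γ t))
            (Set.Icc z.1 t₁) := by
          refine strictMonoOn_of_deriv_pos (convex_Icc _ _)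
            (continuous_const.dot3 ho).continuousOn fun w hw => ?_
          rw [interior_Icc] at hw
          rw [((h.hasDerivAt_center μ w).const_dot3 _).deriv, dot3_smul]
          refine mul_pos (mul_pos (inv_pos.2 (sqrt_mu_pos μ)) (sub_pos.2 (hκ w)))
            (hball (y := (w, z.2)) ?_)
          rw [Prod.dist_eq, max_lt_iff]
          refine ⟨?_, hz.2⟩
          have h2 := hz.1
          simp only [Real.dist_eq] at h2 ⊢
          rw [abs_lt] at h2 ⊢
          constructor <;> linarith [hw.1, hw.2, h2.1, h2.2]
        exact (hmono (Set.left_mem_Icc.2 hzt.le) (Set.right_mem_Icc.2 hzt.le) hzt).trans_le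
          (hE z.2 hz2).1
  obtain ⟨t, ht, htI⟩ := ((key.filter_mono nhdsWithin_le_nhds).and (Ioo_mem_nhdsLT ht₁.1)).exists
  refine hmin t htI (h.muCircle_subset_closure hμ hΔ ⟨htI.1, htI.2.trans ht₁.2⟩ fun s hs => ?_)
  by_cases hst : t = s
  · rw [← hst, h.dot3_center]
  · exact (ht s hs hs htI.2 hst).le

end IsRegularCurve

end Minimality

section Stereographic

open Complex

/-- The continuous extension of the difference quotient of a `C¹` function. -/
def secantSlope (f : ℝ → ℝ) (x : ℝ × ℝ) : ℝ :=
  ∫ r in (0 : ℝ)..1, deriv f (x.1 + r * (x.2 - x.1))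

theorem continuous_secantSlope {f : ℝ → ℝ} (hf : ContDiff ℝ 1 f) :
    Continuous (secantSlope f) := by
  have hf' : Continuous (deriv f) := hf.continuous_deriv le_rfl
  exact intervalIntegral.continuous_parametric_intervalIntegral_of_continuous'
    (f := fun (x : ℝ × ℝ) r => deriv f (x.1 + r * (x.2 - x.1)))
    (hf'.comp (by fun_prop)) 0 1

theorem secantSlope_self (f : ℝ → ℝ) (s : ℝ) : secantSlope f (s, s) = deriv f s := by
  simp [secantSlope]

theorem secantSlope_of_ne {f : ℝ → ℝ} (hf : ContDiff ℝ 1 f) {s t : ℝ} (hst : s ≠ t) :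
    secantSlope f (s, t) = (f t - f s) / (t - s) := by
  have hf' : Continuous (deriv f) := hf.continuous_deriv le_rfl
  have h1 := intervalIntegral.integral_eq_sub_of_hasDerivAt
    (f := fun r => f (s + r * (t - s))) (f' := fun r => deriv f (s + r * (t - s)) * (t - s))
    (a := 0) (b := 1) (fun r _ => by
      have hl : HasDerivAt (fun r : ℝ => s + r * (t - s)) (t - s) r := by
        simpa using ((hasDerivAt_id r).mul_const (t - s)).const_add s
      exact ((hf.differentiable one_ne_zero _).hasDerivAt).comp r hl)
    (Continuous.intervalIntegrable (by fun_prop) _ _)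
  rw [intervalIntegral.integral_mul_const] at h1
  rw [eq_div_iff (sub_ne_zero.2 (Ne.symm hst)), secantSlope, h1]
  simp

/-- A simple arc on the sphere, contained in the complement of an open round disk and tangent to
its boundary circle in the positive direction at three parameters, meets these three points in
their cyclic order on the circle. -/
theorem tangent_cyclic_order_sphere {X Y Z : ℝ → ℝ} {p m q c σ α β : ℝ} (hpm : p < m) (hmq : m < q)
    (hX : ContDiff ℝ 1 X) (hY : ContDiff ℝ 1 Y) (hZ : ContDiff ℝ 1 Z)
    (hsph : ∀ s, X s ^ 2 + Y s ^ 2 + Z s ^ 2 = 1)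
    (hreg : ∀ s, deriv X s = 0 → deriv Y s = 0 → deriv Z s ≠ 0)
    (hinj : ∀ s t, p ≤ s → s < t → t ≤ q → X s = X t → Y s = Y t → Z s ≠ Z t)
    (hc : c < 1) (hσ : 0 < σ) (hcσ : c ^ 2 + σ ^ 2 = 1) (hZc : ∀ s, p ≤ s → s ≤ q → Z s ≤ c)
    (hp : ∃ k, 0 < k ∧ deriv X p = -k * Y p ∧ deriv Y p = k * X p ∧ deriv Z p = 0)
    (hm : ∃ k, 0 < k ∧ deriv X m = -k * Y m ∧ deriv Y m = k * X m ∧ deriv Z m = 0)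
    (hq : ∃ k, 0 < k ∧ deriv X q = -k * Y q ∧ deriv Y q = k * X q ∧ deriv Z q = 0)
    (hZp : Z p = c) (hZm : Z m = c) (hZq : Z q = c)
    (hXp : X p = σ) (hYp : Y p = 0)
    (hXm : X m = σ * Real.cos α) (hYm : Y m = σ * Real.sin α)
    (hXq : X q = σ * Real.cos β) (hYq : Y q = σ * Real.sin β)
    (h0 : 0 < β) (h1 : β < α) (h2 : α < 2 * Real.pi) : False := by
  set z : ℝ → ℂ := fun s => (X s / (1 - Z s) : ℝ) + (Y s / (1 - Z s) : ℝ) * I with hz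
  set G : ℝ × ℝ → ℂ := fun x => (secantSlope X x + secantSlope Y x * I) * (1 - Z x.1) +
    (X x.1 + Y x.1 * I) * secantSlope Z x with hG
  have hZ1 : ∀ s, p ≤ s → s ≤ q → 0 < 1 - Z s := fun s hs hs' => by linarith [hZc s hs hs']
  have hZ1c : ∀ s, p ≤ s → s ≤ q → (1 - Z s : ℂ) ≠ 0 := fun s hs hs' => by
    exact_mod_cast (hZ1 s hs hs').ne'
  have hnorm : ∀ s, p ≤ s → s ≤ q →
      (X s / (1 - Z s)) ^ 2 + (Y s / (1 - Z s)) ^ 2 = 2 / (1 - Z s) - 1 := by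
    intro s hs hs'
    have := (hZ1 s hs hs').ne'
    field_simp
    linarith [hsph s]
  have hre : ∀ s, (z s).re = X s / (1 - Z s) := fun s => by simp only [hz]; simp [-ofReal_div]
  have him : ∀ s, (z s).im = Y s / (1 - Z s) := fun s => by simp only [hz]; simp [-ofReal_div]
  have hsec : ∀ s t, p ≤ s → s < t → t ≤ q →
      ∃ k : ℝ, 0 < k ∧ G (s, t) = k * (z t - z s) := by
    intro s t hs hst ht
    have hs1 := hZ1 s hs (hst.le.trans ht)
    have ht1 := hZ1 t (hs.trans hst.le) ht
    have hs2 := hZ1c s hs (hst.le.trans ht)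
    have ht2 := hZ1c t (hs.trans hst.le) ht
    have hts : (t - s : ℂ) ≠ 0 := by exact_mod_cast (sub_pos.2 hst).ne'
    refine ⟨(1 - Z s) * (1 - Z t) / (t - s),
      div_pos (mul_pos hs1 ht1) (sub_pos.2 hst), ?_⟩
    simp only [hG, hz, secantSlope_of_ne hX hst.ne, secantSlope_of_ne hY hst.ne,
      secantSlope_of_ne hZ hst.ne]
    push_cast
    field_simp
    ring
  have hzne : ∀ s t, p ≤ s → s < t → t ≤ q → z t ≠ z s := by
    intro s t hs hst ht e
    have e1 := congrArg re e
    have e2 := congrArg im e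
    rw [hre, hre] at e1
    rw [him, him] at e2
    have hs1 := hZ1 s hs (hst.le.trans ht)
    have ht1 := hZ1 t (hs.trans hst.le) ht
    have n1 := hnorm s hs (hst.le.trans ht)
    have n2 := hnorm t (hs.trans hst.le) ht
    rw [e1, e2, n1] at n2
    have e3 : Z s = Z t := by
      have : 2 / (1 - Z s) = 2 / (1 - Z t) := by linarith
      rw [div_eq_div_iff hs1.ne' ht1.ne'] at this
      linarith
    rw [e3] at e1 e2
    exact hinj s t hs hst ht ((div_left_inj' ht1.ne').1 e1).symm
      ((div_left_inj' ht1.ne').1 e2).symm e3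
  have hdiag : ∀ s, G (s, s) =
      (deriv X s * (1 - Z s) + X s * deriv Z s : ℝ) +
        (deriv Y s * (1 - Z s) + Y s * deriv Z s : ℝ) * I := by
    intro s
    simp only [hG, secantSlope_self]
    push_cast
    ring
  have hderiv : ∀ s, X s * deriv X s + Y s * deriv Y s + Z s * deriv Z s = 0 := by
    intro s
    have d : ∀ {f : ℝ → ℝ}, ContDiff ℝ 1 f → HasDerivAt f (deriv f s) s := fun hf =>
      (hf.differentiable one_ne_zero s).hasDerivAt
    have d1 := (((d hX).pow 2).add ((d hY).pow 2)).add ((d hZ).pow 2)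
    have d2 := d1.unique ((hasDerivAt_const s (1 : ℝ)).congr_of_eventuallyEq
      (Filter.Eventually.of_forall hsph))
    simp only [Nat.cast_ofNat, Nat.add_one_sub_one, pow_one] at d2
    linarith
  have hG0 : ∀ s t, p ≤ s → s ≤ t → t ≤ q → G (s, t) ≠ 0 := by
    intro s t hs hst ht
    rcases hst.lt_or_eq with hst | rfl
    · obtain ⟨k, hk, e⟩ := hsec s t hs hst ht
      rw [e]
      exact mul_ne_zero (by exact_mod_cast hk.ne') (sub_ne_zero.2 (hzne s t hs hst ht))
    · intro e
      rw [hdiag] at e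
      have e1 := congrArg re e
      have e2 := congrArg im e
      simp only [add_re, add_im, ofReal_re, ofReal_im, mul_re, mul_im, I_re, I_im, zero_re,
        zero_im] at e1 e2
      have hs1 := hZ1 s hs ht
      have e3 : deriv Z s * (1 - Z s) = 0 := by
        linear_combination X s * e1 + Y s * e2 - (1 - Z s) * hderiv s - deriv Z s * hsph s
      have e4 := (mul_eq_zero.1 e3).resolve_right hs1.ne'
      refine hreg s ?_ ?_ e4
      · refine (mul_eq_zero.1 (?_ : deriv X s * (1 - Z s) = 0)).resolve_right hs1.ne'
        rw [e4] at e1; linarith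
      · refine (mul_eq_zero.1 (?_ : deriv Y s * (1 - Z s) = 0)).resolve_right hs1.ne'
        rw [e4] at e2; linarith
  have htan : ∀ s, Z s = c →
      (∃ k, 0 < k ∧ deriv X s = -k * Y s ∧ deriv Y s = k * X s ∧ deriv Z s = 0) →
      ∃ k : ℝ, 0 < k ∧ G (s, s) = k * (I * z s) := by
    rintro s hZs ⟨k, hk, ex, ey, ez⟩
    have hcp : 0 < 1 - c := by linarith
    have hcc : (1 - c : ℂ) ≠ 0 := by exact_mod_cast hcp.ne'
    refine ⟨k * (1 - c) ^ 2, by positivity, ?_⟩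
    rw [hdiag, ex, ey, ez]
    simp only [hz, hZs]
    push_cast
    field_simp
    linear_combination (-(k * Y s * (1 - c)) : ℂ) * I_sq
  have hcp : 0 < 1 - c := by linarith
  have hR : σ / (1 - c) * (σ / (1 - c)) = 2 / (1 - c) - 1 := by
    field_simp; linarith
  refine tangent_cyclic_order (G := G) (z := z) (R := σ / (1 - c)) hpm hmq (div_pos hσ hcp) ?_ hG0
    hsec ?_ (htan p hZp hp) (htan m hZm hm) (htan q hZq hq) ?_ ?_ ?_ h0 h1 h2
  · have c1 := continuous_secantSlope hX
    have c2 := continuous_secantSlope hY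
    have c3 := continuous_secantSlope hZ
    have c4 := hX.continuous
    have c5 := hY.continuous
    have c6 := hZ.continuous
    simp only [hG]
    fun_prop
  · intro s hs hs'
    refine le_of_sq_le_sq ?_ (div_pos hσ hcp).le
    rw [← normSq_eq_norm_sq, normSq_apply, hre, him, ← pow_two, ← pow_two, hnorm s hs hs',
      pow_two, hR]
    have := hZ1 s hs hs'
    have h3 := hZc s hs hs'
    gcongr
  · simp only [hz, hZp, hXp, hYp]
    simp
  · simp only [hz, hZm, hXm, hYm, exp_mul_I]
    push_cast
    ring
  · simp only [hz, hZq, hXq, hYq, exp_mul_I]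
    push_cast
    ring

end Stereographic

section Contact

namespace IsRegularCurve

variable {γ : ℝ → R3} {a b μ : ℝ}

/-- The first axis of the orthonormal frame of the tangent `μ`-circle at `γ t`: together with the
unit tangent and the center it is an orthonormal basis. -/
def circleAxis (μ : ℝ) (γ : ℝ → R3) (t : ℝ) : R3 :=
  (Real.sqrt (1 + μ ^ 2))⁻¹ • γ t - (μ / Real.sqrt (1 + μ ^ 2)) • unitNormal γ t

theorem mu_sq_add_sq (μ : ℝ) :
    (μ / Real.sqrt (1 + μ ^ 2)) ^ 2 + ((Real.sqrt (1 + μ ^ 2))⁻¹) ^ 2 = 1 := by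
  have h1 := Real.sq_sqrt (show (0 : ℝ) ≤ 1 + μ ^ 2 by positivity)
  have h2 := (sqrt_mu_pos μ).ne'
  field_simp
  rw [h1]; ring

theorem dot3_circleAxis (x : R3) (t : ℝ) : dot3 x (circleAxis μ γ t) =
    (Real.sqrt (1 + μ ^ 2))⁻¹ * dot3 x (γ t) -
      μ / Real.sqrt (1 + μ ^ 2) * dot3 x (unitNormal γ t) := by
  rw [circleAxis, dot3_sub, dot3_smul, dot3_smul]

theorem dot3_tangentCenter (x : R3) (t : ℝ) : dot3 x (tangentCenter μ γ t) =
    μ / Real.sqrt (1 + μ ^ 2) * dot3 x (γ t) +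
      (Real.sqrt (1 + μ ^ 2))⁻¹ * dot3 x (unitNormal γ t) := by
  rw [tangentCenter, dot3_smul, dot3_add, dot3_smul]; ring

theorem circle_frame (h : IsRegularCurve γ) (t : ℝ) (x y : R3) :
    dot3 x y = dot3 x (circleAxis μ γ t) * dot3 y (circleAxis μ γ t) +
      dot3 x (unitTangent γ t) * dot3 y (unitTangent γ t) +
      dot3 x (tangentCenter μ γ t) * dot3 y (tangentCenter μ γ t) := by
  simp only [dot3_circleAxis, dot3_tangentCenter]
  rw [h.frame t x y]
  linear_combination (-(dot3 x (γ t) * dot3 y (γ t) +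
    dot3 x (unitNormal γ t) * dot3 y (unitNormal γ t))) * mu_sq_add_sq μ

theorem ext_circle_frame (h : IsRegularCurve γ) (t : ℝ) {x y : R3}
    (h1 : dot3 x (circleAxis μ γ t) = dot3 y (circleAxis μ γ t))
    (h2 : dot3 x (unitTangent γ t) = dot3 y (unitTangent γ t))
    (h3 : dot3 x (tangentCenter μ γ t) = dot3 y (tangentCenter μ γ t)) : x = y := by
  rw [← sub_eq_zero, ← dot3_self_eq_zero, h.circle_frame (μ := μ) t, sub_dot3, sub_dot3, sub_dot3,
    h1, h2, h3]
  ring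

theorem circleAxis_dot3 (h : IsRegularCurve γ) (t : ℝ) :
    dot3 (γ t) (circleAxis μ γ t) = (Real.sqrt (1 + μ ^ 2))⁻¹ := by
  rw [dot3_circleAxis, h.sphere, dot3_normal]; ring

theorem det3_circleAxis (h : IsRegularCurve γ) (t : ℝ) (z : R3) :
    det3 (circleAxis μ γ t) (tangentCenter μ γ t) z = -dot3 z (unitTangent γ t) := by
  have e : dot3 (circleAxis μ γ t) (unitTangent γ t) = 0 := by
    rw [dot3_comm, dot3_circleAxis, dot3_comm, h.dot3_tangent, tangent_normal]; ring
  have e' : dot3 (circleAxis μ γ t) (unitNormal γ t) = -(μ / Real.sqrt (1 + μ ^ 2)) := by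
    rw [dot3_comm, dot3_circleAxis, dot3_comm, dot3_normal, h.normal_unit]; ring
  rw [det3_frame (h.sphere t) (h.tangent_unit t) (h.dot3_tangent t), ← unitNormal_eq,
    dot3_comm _ (γ t), h.circleAxis_dot3, e, e', dot3_comm (tangentCenter μ γ t) (γ t),
    dot3_comm (tangentCenter μ γ t) (unitTangent γ t),
    dot3_comm (tangentCenter μ γ t) (unitNormal γ t), h.tangent_center, h.dot3_center,
    h.normal_center]
  linear_combination (-dot3 z (unitTangent γ t)) * mu_sq_add_sq μ

theorem det3_unitTangent (h : IsRegularCurve γ) (t : ℝ) (z : R3) :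
    det3 (unitTangent γ t) (tangentCenter μ γ t) z = dot3 z (circleAxis μ γ t) := by
  rw [det3_frame (h.sphere t) (h.tangent_unit t) (h.dot3_tangent t), ← unitNormal_eq,
    dot3_comm (tangentCenter μ γ t) (γ t), dot3_comm (tangentCenter μ γ t) (unitTangent γ t),
    dot3_comm (tangentCenter μ γ t) (unitNormal γ t), h.tangent_unit, tangent_normal,
    dot3_circleAxis, h.dot3_center, h.normal_center, dot3_comm (unitTangent γ t) (γ t),
    h.dot3_tangent]
  ring

theorem det3_center_point (h : IsRegularCurve γ) (x : R3) (s : ℝ) :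
    det3 x (tangentCenter μ γ s) (γ s) =
      (Real.sqrt (1 + μ ^ 2))⁻¹ * dot3 x (unitTangent γ s) := by
  rw [det3_frame (h.sphere s) (h.tangent_unit s) (h.dot3_tangent s), ← unitNormal_eq,
    dot3_comm (tangentCenter μ γ s) (γ s), dot3_comm (tangentCenter μ γ s) (unitTangent γ s),
    dot3_comm (tangentCenter μ γ s) (unitNormal γ s), h.dot3_tangent, dot3_normal, h.sphere,
    h.dot3_center, h.normal_center, h.tangent_center]
  ring

/-- A contact point of the curve with a tangent circle at which the circle is again the tangent
circle: the curve moves along the circle in the positive direction. -/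
theorem deriv_of_center_eq (h : IsRegularCurve γ) {s t : ℝ}
    (hst : tangentCenter μ γ s = tangentCenter μ γ t) :
    ∃ k : ℝ, 0 < k ∧
      deriv (fun u => dot3 (γ u) (circleAxis μ γ t)) s = -k * dot3 (γ s) (unitTangent γ t) ∧
      deriv (fun u => dot3 (γ u) (unitTangent γ t)) s = k * dot3 (γ s) (circleAxis μ γ t) ∧
      deriv (fun u => dot3 (γ u) (tangentCenter μ γ t)) s = 0 := by
  have hσ := inv_pos.2 (sqrt_mu_pos μ)
  have d := fun x => ((h.hasDerivAt s).dot3_const x).deriv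
  have key : ∀ x, dot3 (deriv γ s) x = norm3 (deriv γ s) / (Real.sqrt (1 + μ ^ 2))⁻¹ *
      det3 x (tangentCenter μ γ t) (γ s) := by
    intro x
    rw [← hst, h.det3_center_point, h.deriv_eq, smul_dot3, ← h.deriv_eq, dot3_comm x]
    field_simp
  refine ⟨_, div_pos (h.speed_pos s) hσ, ?_, ?_, ?_⟩
  · rw [d, key, h.det3_circleAxis]; ring
  · rw [d, key, h.det3_unitTangent]
  · rw [d, ← hst, h.deriv_eq, smul_dot3, h.tangent_center, mul_zero]

theorem rot3_circleAxis (h : IsRegularCurve γ) (t θ : ℝ) :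
    dot3 (rot3 (tangentCenter μ γ t) θ (γ t)) (circleAxis μ γ t) =
      (Real.sqrt (1 + μ ^ 2))⁻¹ * Real.cos θ := by
  have h1 : dot3 (tangentCenter μ γ t) (circleAxis μ γ t) = 0 := by
    rw [dot3_circleAxis, dot3_comm _ (γ t), dot3_comm _ (unitNormal γ t), h.dot3_center,
      h.normal_center]
    ring
  rw [rot3, add_dot3, add_dot3, smul_dot3, smul_dot3, smul_dot3, h1, h.circleAxis_dot3,
    dot3_comm (cross3 _ _), ← det3, h.det3_circleAxis, h.dot3_tangent]
  ring

theorem rot3_unitTangent (h : IsRegularCurve γ) (t θ : ℝ) :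
    dot3 (rot3 (tangentCenter μ γ t) θ (γ t)) (unitTangent γ t) =
      (Real.sqrt (1 + μ ^ 2))⁻¹ * Real.sin θ := by
  rw [rot3, add_dot3, add_dot3, smul_dot3, smul_dot3, smul_dot3, h.dot3_tangent,
    dot3_comm (tangentCenter μ γ t) (unitTangent γ t), h.tangent_center,
    dot3_comm (cross3 _ _), ← det3, h.det3_unitTangent, h.circleAxis_dot3]
  ring

/-- Contact points of the shell with an enclosed tangent circle are met in cyclic order. -/
theorem contact_cyclic_order (h : IsRegularCurve γ) (hμ : 0 < μ) (hκ : ∀ s, kappa γ s < μ)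
    (hsh : IsPositiveShell γ a b) {Δ : Set R3} (hΔ : IsInteriorDomain γ a b 1 Δ) {t m q : ℝ}
    (ht : t ∈ Set.Ioo a b) (hC : muCircle μ (tangentCenter μ γ t) ⊆ closure Δ)
    (htm : t < m) (hmq : m < q) (hq : q ∈ Set.Icc a b)
    (hm : dot3 (γ m) (tangentCenter μ γ t) = μ / Real.sqrt (1 + μ ^ 2))
    (hqc : dot3 (γ q) (tangentCenter μ γ t) = μ / Real.sqrt (1 + μ ^ 2)) {α β : ℝ}
    (hXm : dot3 (γ m) (circleAxis μ γ t) = (Real.sqrt (1 + μ ^ 2))⁻¹ * Real.cos α)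
    (hYm : dot3 (γ m) (unitTangent γ t) = (Real.sqrt (1 + μ ^ 2))⁻¹ * Real.sin α)
    (hXq : dot3 (γ q) (circleAxis μ γ t) = (Real.sqrt (1 + μ ^ 2))⁻¹ * Real.cos β)
    (hYq : dot3 (γ q) (unitTangent γ t) = (Real.sqrt (1 + μ ^ 2))⁻¹ * Real.sin β)
    (h0 : 0 < β) (h1 : β < α) (h2 : α < 2 * Real.pi) : False := by
  have hcd : ∀ x, ContDiff ℝ 1 fun s => dot3 (γ s) x := fun x =>
    (h.smooth.of_le (by exact_mod_cast le_top)).dot3 contDiff_const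
  have hmem : ∀ s, t ≤ s → s ≤ q → s ∈ Set.Icc a b := fun s hs hs' =>
    ⟨ht.1.le.trans hs, hs'.trans hq.2⟩
  have hE := fun s hs => h.dot3_le_and_center_eq hμ hκ hsh hΔ (Set.Ioo_subset_Icc_self ht) hC
    (s := s) hs
  have hd := fun s hs hc => h.deriv_of_center_eq ((hE s hs).2 hc).2
  refine tangent_cyclic_order_sphere htm hmq (hcd (circleAxis μ γ t)) (hcd (unitTangent γ t))
    (hcd (tangentCenter μ γ t)) ?_ ?_ ?_ (div_sqrt_lt_one μ) (inv_pos.2 (sqrt_mu_pos μ))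
    (mu_sq_add_sq μ) (fun s hs hs' => (hE s (hmem s hs hs')).1) (h.deriv_of_center_eq rfl)
    (hd m (hmem m htm.le hmq.le) hm) (hd q hq hqc) (h.dot3_center μ t) hm hqc (h.circleAxis_dot3 t)
    (h.dot3_tangent t) hXm hYm hXq hYq h0 h1 h2
  · intro s
    have := h.circle_frame (μ := μ) t (γ s) (γ s)
    rw [h.sphere] at this
    linarith
  · intro s e1 e2 e3
    rw [((h.hasDerivAt s).dot3_const _).deriv] at e1 e2 e3
    refine h.reg s (h.ext_circle_frame (μ := μ) t ?_ ?_ ?_) <;>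
      simp only [e1, e2, e3] <;> simp [dot3]
  · intro s u hs hsu hu e1 e2 e3
    exact ne_of_mem hsh.1 ⟨ht.1.trans_le hs, hsu.trans_le (hu.trans hq.2)⟩
      (hmem u (hs.trans hsu.le) hu) hsu.ne' (h.ext_circle_frame t e1 e2 e3).symm

end IsRegularCurve

end Contact

theorem stmt8 (μ : ℝ) (γ2 : ℝ → R3) (l a2 b2 t1 t2 : ℝ) (Δ : Set R3)
    (hμ : 0 < μ) (hreg : IsRegularCurve γ2) (hper : HasPeriod γ2 l)
    (hκ : ∀ s, kappa γ2 s < μ) (hint : b2 - a2 < l)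
    (hshell : IsPositiveShell γ2 a2 b2)
    (hΔ : IsInteriorDomain γ2 a2 b2 1 Δ)
    (ht1 : t1 ∈ Set.Ioo a2 b2)
    (hC : muCircle μ (tangentCenter μ γ2 t1) ⊆ closure Δ)
    (hmin : ∀ t ∈ Set.Ioo a2 t1, ¬muCircle μ (tangentCenter μ γ2 t) ⊆ closure Δ)
    (ht2 : t2 = sSup {t | t ∈ Set.Icc a2 b2 ∧ γ2 t ∈ muCircle μ (tangentCenter μ γ2 t1)}) :
    ∀ θ ∈ Set.Ico (0 : ℝ) (2 * Real.pi),
      rot3 (tangentCenter μ γ2 t1) θ (γ2 t1) = γ2 t2 → Real.pi ≤ θ := by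
  intro θ hθ hrot
  obtain ⟨m, hm, htm, hmc, hmY⟩ := hreg.exists_contact_nonpos hμ hκ hshell hΔ ht1 hC hmin
  set S := {t | t ∈ Set.Icc a2 b2 ∧ γ2 t ∈ muCircle μ (tangentCenter μ γ2 t1)} with hS
  have hSeq : S = Set.Icc a2 b2 ∩
      {t | dot3 (γ2 t) (tangentCenter μ γ2 t1) = μ / Real.sqrt (1 + μ ^ 2)} := by
    ext t
    simp [hS, muCircle, hreg.sphere]
  have hScl : IsCompact S := by
    rw [hSeq]
    exact isCompact_Icc.inter_right
      (isClosed_eq (hreg.smooth.continuous.dot3 continuous_const) continuous_const)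
  have hmS : m ∈ S := ⟨hm, hreg.sphere m, hmc⟩
  have hqS : t2 ∈ S := ht2 ▸ hScl.sSup_mem ⟨m, hmS⟩
  have hmq : m ≤ t2 := ht2 ▸ le_csSup hScl.bddAbove hmS
  have hσ := inv_pos.2 (IsRegularCurve.sqrt_mu_pos μ)
  set σ := (Real.sqrt (1 + μ ^ 2))⁻¹ with hσdef
  have hXq : dot3 (γ2 t2) (IsRegularCurve.circleAxis μ γ2 t1) = σ * Real.cos θ := by
    rw [← hrot, hreg.rot3_circleAxis]
  have hYq : dot3 (γ2 t2) (unitTangent γ2 t1) = σ * Real.sin θ := by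
    rw [← hrot, hreg.rot3_unitTangent]
  have hne : ∀ s ∈ S, t1 < s →
      ¬(dot3 (γ2 s) (IsRegularCurve.circleAxis μ γ2 t1) = σ ∧
        dot3 (γ2 s) (unitTangent γ2 t1) = 0) := by
    rintro s hs hlt ⟨e1, e2⟩
    refine IsRegularCurve.ne_of_mem hshell.1 ht1 hs.1 hlt.ne'
      (hreg.ext_circle_frame (μ := μ) t1 ?_ ?_ ?_)
    · rw [e1, hreg.circleAxis_dot3]
    · rw [e2, hreg.dot3_tangent]
    · rw [hs.2.2, hreg.dot3_center]
  replace hmY : dot3 (γ2 m) (unitTangent γ2 t1) ≤ 0 := by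
    rw [unitTangent, dot3_smul]
    exact mul_nonpos_of_nonneg_of_nonpos (inv_nonneg.2 (hreg.speed_pos t1).le) hmY
  by_contra! hlt
  have hθ0 : 0 < θ := by
    refine lt_of_le_of_ne hθ.1 fun h0 => hne t2 hqS (htm.trans_le hmq) ⟨?_, ?_⟩
    · rw [hXq, ← h0, Real.cos_zero, mul_one]
    · rw [hYq, ← h0, Real.sin_zero, mul_zero]
  rcases hmq.eq_or_lt with rfl | hmq
  · rw [hYq] at hmY
    exact (mul_pos hσ (Real.sin_pos_of_pos_of_lt_pi hθ0 hlt)).not_ge hmY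
  obtain ⟨α, hα, hα', hXm, hYm⟩ : ∃ α, Real.pi ≤ α ∧ α < 2 * Real.pi ∧
      dot3 (γ2 m) (IsRegularCurve.circleAxis μ γ2 t1) = σ * Real.cos α ∧
      dot3 (γ2 m) (unitTangent γ2 t1) = σ * Real.sin α := by
    have hsum : dot3 (γ2 m) (IsRegularCurve.circleAxis μ γ2 t1) ^ 2 +
        dot3 (γ2 m) (unitTangent γ2 t1) ^ 2 =
        σ ^ 2 := by
      have e := hreg.circle_frame (μ := μ) t1 (γ2 m) (γ2 m)
      rw [hreg.sphere, hmc] at e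
      linarith [IsRegularCurve.mu_sq_add_sq μ]
    have hnem := hne m hmS htm
    generalize dot3 (γ2 m) (IsRegularCurve.circleAxis μ γ2 t1) = x at *
    generalize dot3 (γ2 m) (unitTangent γ2 t1) = y at *
    have hx1 : -1 ≤ x / σ := by
      rw [le_div_iff₀ hσ]; nlinarith
    have hx2 : x / σ ≤ 1 := by
      rw [div_le_iff₀ hσ]; nlinarith
    have hxσ : x < σ := by
      refine lt_of_le_of_ne (by rwa [div_le_iff₀ hσ, one_mul] at hx2) fun he => hnem ⟨he, ?_⟩
      subst he
      exact pow_eq_zero_iff two_ne_zero |>.1 (by linarith)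
    have hac : 0 < Real.arccos (x / σ) := Real.arccos_pos.2 ((div_lt_one hσ).2 hxσ)
    refine ⟨2 * Real.pi - Real.arccos (x / σ), ?_, by linarith, ?_, ?_⟩
    · linarith [Real.arccos_le_pi (x / σ)]
    · rw [Real.cos_two_pi_sub, Real.cos_arccos hx1 hx2]
      field_simp
    · rw [Real.sin_two_pi_sub, Real.sin_arccos]
      have e : 1 - (x / σ) ^ 2 = (-y / σ) ^ 2 := by
        field_simp; linarith
      rw [e, Real.sqrt_sq (div_nonneg (by linarith) hσ.le)]
      field_simp
  exact hreg.contact_cyclic_order hμ hκ hshell hΔ ht1 hC htm hmq hqS.1 hmc hqS.2.2 hXm hYm hXq hYq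
    hθ0 (hlt.trans_le hα) hα'
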